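/- arXiv:2103.16691 — 6 statements merged into one kernel-verified Lean document; each statement's English description precedes it below -/
import Mathlib

section
/- The center Z(A) of the binary cubic generic Clifford algebra A is a free module of rank 2 over the subalgebra S = k[x³, y³, α, β, γ], with basis {1, δ³}. -/
noncomputable section

open FreeAlgebra

variable (k : Type*) [Field k]

/-- Relations of the binary cubic generic Clifford algebra. -/
inductive GCRel : FreeAlgebra k (Fin 2) → FreeAlgebra k (Fin 2) → Prop
  | rel1 : GCRel ((ι k 0) ^ 3 * ι k 1) (ι k 1 * (ι k 0) ^ 3)
  | rel2 : GCRel (ι k 0 * (ι k 1) ^ 3) ((ι k 1) ^ 3 * ι k 0)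
  | rel3 : GCRel ((ι k 0) ^ 2 * (ι k 1) ^ 2 + (ι k 0 * ι k 1) ^ 2)
      ((ι k 1) ^ 2 * (ι k 0) ^ 2 + (ι k 1 * ι k 0) ^ 2)

/-- The binary cubic generic Clifford algebra. -/
abbrev GCA := RingQuot (GCRel k)

/-- The generator x. -/
def gx : GCA k := RingQuot.mkAlgHom k (GCRel k) (ι k 0)

/-- The generator y. -/
def gy : GCA k := RingQuot.mkAlgHom k (GCRel k) (ι k 1)

/-- α = x²y + xyx + yx². -/
def gα : GCA k := gx k ^ 2 * gy k + gx k * gy k * gx k + gy k * gx k ^ 2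

/-- β = xy² + yxy + y²x. -/
def gβ : GCA k := gx k * gy k ^ 2 + gy k * gx k * gy k + gy k ^ 2 * gx k

/-- γ = (xy)² − y²x². -/
def gγ : GCA k := (gx k * gy k) ^ 2 - gy k ^ 2 * gx k ^ 2

/-- δ = yx − ω·xy. -/
def gδ (ω : k) : GCA k := gy k * gx k - algebraMap k (GCA k) ω * (gx k * gy k)

end

theorem ext18 {R : Type*} {u v : Fin 18 → R} (h0 : u 0 = v 0)
    (h1 : u 1 = v 1)
    (h2 : u 2 = v 2)
    (h3 : u 3 = v 3)
    (h4 : u 4 = v 4)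
    (h5 : u 5 = v 5)
    (h6 : u 6 = v 6)
    (h7 : u 7 = v 7)
    (h8 : u 8 = v 8)
    (h9 : u 9 = v 9)
    (h10 : u 10 = v 10)
    (h11 : u 11 = v 11)
    (h12 : u 12 = v 12)
    (h13 : u 13 = v 13)
    (h14 : u 14 = v 14)
    (h15 : u 15 = v 15)
    (h16 : u 16 = v 16)
    (h17 : u 17 = v 17) : u = v := by
  funext i
  fin_cases i <;> assumption

section ops
variable {R : Type*} [CommRing R] (w a b p q g : R)

def opLx (a : R) : Module.End R (Fin 18 → R) where
  toFun v := ![a * v 6,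
    a * v 7,
    a * v 8,
    v 0,
    v 1,
    v 2,
    v 3,
    v 4,
    v 5,
    a * v 15,
    a * v 16,
    a * v 17,
    v 9,
    v 10,
    v 11,
    v 12,
    v 13,
    v 14]
  map_add' u v := by
    apply ext18 <;> simp only [Pi.add_apply, Matrix.cons_val] <;> ring
  map_smul' r v := by
    apply ext18 <;> simp only [Pi.smul_apply, smul_eq_mul, RingHom.id_apply, Matrix.cons_val] <;> ring

theorem opLx_apply (a : R) (v : Fin 18 → R) :
    opLx a v 0 = a * v 6 ∧
    opLx a v 1 = a * v 7 ∧
    opLx a v 2 = a * v 8 ∧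
    opLx a v 3 = v 0 ∧
    opLx a v 4 = v 1 ∧
    opLx a v 5 = v 2 ∧
    opLx a v 6 = v 3 ∧
    opLx a v 7 = v 4 ∧
    opLx a v 8 = v 5 ∧
    opLx a v 9 = a * v 15 ∧
    opLx a v 10 = a * v 16 ∧
    opLx a v 11 = a * v 17 ∧
    opLx a v 12 = v 9 ∧
    opLx a v 13 = v 10 ∧
    opLx a v 14 = v 11 ∧
    opLx a v 15 = v 12 ∧
    opLx a v 16 = v 13 ∧
    opLx a v 17 = v 14 :=
  ⟨rfl, rfl, rfl, rfl, rfl, rfl, rfl, rfl, rfl, rfl, rfl, rfl, rfl, rfl, rfl, rfl, rfl, rfl⟩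

def opRy (b : R) : Module.End R (Fin 18 → R) where
  toFun v := ![b * v 2,
    v 0,
    v 1,
    b * v 5,
    v 3,
    v 4,
    b * v 8,
    v 6,
    v 7,
    b * v 11,
    v 9,
    v 10,
    b * v 14,
    v 12,
    v 13,
    b * v 17,
    v 15,
    v 16]
  map_add' u v := by
    apply ext18 <;> simp only [Pi.add_apply, Matrix.cons_val] <;> ring
  map_smul' r v := by
    apply ext18 <;> simp only [Pi.smul_apply, smul_eq_mul, RingHom.id_apply, Matrix.cons_val] <;> ring

theorem opRy_apply (b : R) (v : Fin 18 → R) :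
    opRy b v 0 = b * v 2 ∧
    opRy b v 1 = v 0 ∧
    opRy b v 2 = v 1 ∧
    opRy b v 3 = b * v 5 ∧
    opRy b v 4 = v 3 ∧
    opRy b v 5 = v 4 ∧
    opRy b v 6 = b * v 8 ∧
    opRy b v 7 = v 6 ∧
    opRy b v 8 = v 7 ∧
    opRy b v 9 = b * v 11 ∧
    opRy b v 10 = v 9 ∧
    opRy b v 11 = v 10 ∧
    opRy b v 12 = b * v 14 ∧
    opRy b v 13 = v 12 ∧
    opRy b v 14 = v 13 ∧
    opRy b v 15 = b * v 17 ∧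
    opRy b v 16 = v 15 ∧
    opRy b v 17 = v 16 :=
  ⟨rfl, rfl, rfl, rfl, rfl, rfl, rfl, rfl, rfl, rfl, rfl, rfl, rfl, rfl, rfl, rfl, rfl, rfl⟩

def opLy (w b p q g : R) : Module.End R (Fin 18 → R) where
  toFun v := ![(b * v 2) + p * v 6 + q * v 9 + g * v 12 - w * p * (b * v 14),
    (v 0) + p * v 7 + q * v 10 + g * v 13 - w * p * (v 12),
    (v 1) + p * v 8 + q * v 11 + g * v 14 - w * p * (v 13),
    w * (b * v 5) - g * v 15 + w * p * (b * v 17),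
    w * (v 3) - g * v 16 + w * p * (v 15),
    w * (v 4) - g * v 17 + w * p * (v 16),
    (-1 - w) * (b * v 8) - q * v 15,
    (-1 - w) * (v 6) - q * v 16,
    (-1 - w) * (v 7) - q * v 17,
    v 3 + (-1 - w) * (b * v 11) + p * v 15,
    v 4 + (-1 - w) * (v 9) + p * v 16,
    v 5 + (-1 - w) * (v 10) + p * v 17,
    -v 6 + w * (b * v 14),
    -v 7 + w * (v 12),
    -v 8 + w * (v 13),
    (b * v 17),
    (v 15),
    (v 16)]
  map_add' u v := by
    apply ext18 <;> simp only [Pi.add_apply, Matrix.cons_val] <;> ring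
  map_smul' r v := by
    apply ext18 <;> simp only [Pi.smul_apply, smul_eq_mul, RingHom.id_apply, Matrix.cons_val] <;> ring

theorem opLy_apply (w b p q g : R) (v : Fin 18 → R) :
    opLy w b p q g v 0 = (b * v 2) + p * v 6 + q * v 9 + g * v 12 - w * p * (b * v 14) ∧
    opLy w b p q g v 1 = (v 0) + p * v 7 + q * v 10 + g * v 13 - w * p * (v 12) ∧
    opLy w b p q g v 2 = (v 1) + p * v 8 + q * v 11 + g * v 14 - w * p * (v 13) ∧
    opLy w b p q g v 3 = w * (b * v 5) - g * v 15 + w * p * (b * v 17) ∧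
    opLy w b p q g v 4 = w * (v 3) - g * v 16 + w * p * (v 15) ∧
    opLy w b p q g v 5 = w * (v 4) - g * v 17 + w * p * (v 16) ∧
    opLy w b p q g v 6 = (-1 - w) * (b * v 8) - q * v 15 ∧
    opLy w b p q g v 7 = (-1 - w) * (v 6) - q * v 16 ∧
    opLy w b p q g v 8 = (-1 - w) * (v 7) - q * v 17 ∧
    opLy w b p q g v 9 = v 3 + (-1 - w) * (b * v 11) + p * v 15 ∧
    opLy w b p q g v 10 = v 4 + (-1 - w) * (v 9) + p * v 16 ∧
    opLy w b p q g v 11 = v 5 + (-1 - w) * (v 10) + p * v 17 ∧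
    opLy w b p q g v 12 = -v 6 + w * (b * v 14) ∧
    opLy w b p q g v 13 = -v 7 + w * (v 12) ∧
    opLy w b p q g v 14 = -v 8 + w * (v 13) ∧
    opLy w b p q g v 15 = (b * v 17) ∧
    opLy w b p q g v 16 = (v 15) ∧
    opLy w b p q g v 17 = (v 16) :=
  ⟨rfl, rfl, rfl, rfl, rfl, rfl, rfl, rfl, rfl, rfl, rfl, rfl, rfl, rfl, rfl, rfl, rfl, rfl⟩

def opRx (w a p q g : R) : Module.End R (Fin 18 → R) where
  toFun v := ![(a * v 6) + q * v 2 + p * v 9 + g * v 10 - w * q * (a * v 16),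
    w * (a * v 7) - g * v 11 + w * q * (a * v 17),
    (-1 - w) * (a * v 8) - p * v 11,
    (v 0) + q * v 5 + p * v 12 + g * v 13 - w * q * (v 10),
    w * (v 1) - g * v 14 + w * q * (v 11),
    (-1 - w) * (v 2) - p * v 14,
    (v 3) + q * v 8 + p * v 15 + g * v 16 - w * q * (v 13),
    w * (v 4) - g * v 17 + w * q * (v 14),
    (-1 - w) * (v 5) - p * v 17,
    v 1 + (-1 - w) * (a * v 15) + q * v 11,
    -v 2 + w * (a * v 16),
    (a * v 17),
    v 4 + (-1 - w) * (v 9) + q * v 14,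
    -v 5 + w * (v 10),
    (v 11),
    v 7 + (-1 - w) * (v 12) + q * v 17,
    -v 8 + w * (v 13),
    (v 14)]
  map_add' u v := by
    apply ext18 <;> simp only [Pi.add_apply, Matrix.cons_val] <;> ring
  map_smul' r v := by
    apply ext18 <;> simp only [Pi.smul_apply, smul_eq_mul, RingHom.id_apply, Matrix.cons_val] <;> ring

theorem opRx_apply (w a p q g : R) (v : Fin 18 → R) :
    opRx w a p q g v 0 = (a * v 6) + q * v 2 + p * v 9 + g * v 10 - w * q * (a * v 16) ∧
    opRx w a p q g v 1 = w * (a * v 7) - g * v 11 + w * q * (a * v 17) ∧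
    opRx w a p q g v 2 = (-1 - w) * (a * v 8) - p * v 11 ∧
    opRx w a p q g v 3 = (v 0) + q * v 5 + p * v 12 + g * v 13 - w * q * (v 10) ∧
    opRx w a p q g v 4 = w * (v 1) - g * v 14 + w * q * (v 11) ∧
    opRx w a p q g v 5 = (-1 - w) * (v 2) - p * v 14 ∧
    opRx w a p q g v 6 = (v 3) + q * v 8 + p * v 15 + g * v 16 - w * q * (v 13) ∧
    opRx w a p q g v 7 = w * (v 4) - g * v 17 + w * q * (v 14) ∧
    opRx w a p q g v 8 = (-1 - w) * (v 5) - p * v 17 ∧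
    opRx w a p q g v 9 = v 1 + (-1 - w) * (a * v 15) + q * v 11 ∧
    opRx w a p q g v 10 = -v 2 + w * (a * v 16) ∧
    opRx w a p q g v 11 = (a * v 17) ∧
    opRx w a p q g v 12 = v 4 + (-1 - w) * (v 9) + q * v 14 ∧
    opRx w a p q g v 13 = -v 5 + w * (v 10) ∧
    opRx w a p q g v 14 = (v 11) ∧
    opRx w a p q g v 15 = v 7 + (-1 - w) * (v 12) + q * v 17 ∧
    opRx w a p q g v 16 = -v 8 + w * (v 13) ∧
    opRx w a p q g v 17 = (v 14) :=
  ⟨rfl, rfl, rfl, rfl, rfl, rfl, rfl, rfl, rfl, rfl, rfl, rfl, rfl, rfl, rfl, rfl, rfl, rfl⟩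

end ops

section identities
variable {R : Type*} [CommRing R] (w a b p q g : R)

theorem opLxRy : Commute (opLx a) (opRy b) := by
  refine LinearMap.ext fun v => ?_
  apply ext18 <;> simp only [Module.End.mul_apply, opLx_apply, opRy_apply] <;> ring

theorem opLxRx : Commute (opLx a) (opRx w a p q g) := by
  refine LinearMap.ext fun v => ?_
  apply ext18 <;> simp only [Module.End.mul_apply, opLx_apply, opRx_apply] <;> ring

theorem opLyRy : Commute (opLy w b p q g) (opRy b) := by
  refine LinearMap.ext fun v => ?_
  apply ext18 <;> simp only [Module.End.mul_apply, opLy_apply, opRy_apply] <;> ring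

theorem opLyRx (hw : w ^ 2 = -1 - w) :
    Commute (opLy w b p q g) (opRx w a p q g) := by
  refine LinearMap.ext fun v => ?_
  apply ext18 <;> simp only [Module.End.mul_apply, opLy_apply, opRx_apply] <;> grind

theorem opLx_cube : opLx a ^ 3 = a • (1 : Module.End R (Fin 18 → R)) := by
  refine LinearMap.ext fun v => ?_
  apply ext18 <;> simp only [pow_succ, pow_zero, one_mul, Module.End.mul_apply,
    LinearMap.smul_apply, Module.End.one_apply, Pi.smul_apply, smul_eq_mul, opLx_apply]

theorem opLy_cube (hw : w ^ 2 = -1 - w) :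
    opLy w b p q g ^ 3 = b • (1 : Module.End R (Fin 18 → R)) := by
  refine LinearMap.ext fun v => ?_
  apply ext18 <;> simp only [pow_succ, pow_zero, one_mul, Module.End.mul_apply,
    LinearMap.smul_apply, Module.End.one_apply, Pi.smul_apply, smul_eq_mul, opLy_apply] <;> grind

theorem op_alpha (hw : w ^ 2 = -1 - w) :
    opLx a ^ 2 * opLy w b p q g + opLx a * opLy w b p q g * opLx a + opLy w b p q g * opLx a ^ 2
      = p • (1 : Module.End R (Fin 18 → R)) := by
  refine LinearMap.ext fun v => ?_
  apply ext18 <;> simp only [pow_succ, pow_zero, one_mul, Module.End.mul_apply,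
    LinearMap.add_apply, Pi.add_apply,
    LinearMap.smul_apply, Module.End.one_apply, Pi.smul_apply, smul_eq_mul, opLy_apply,
    opLx_apply] <;> grind

theorem op_beta (hw : w ^ 2 = -1 - w) :
    opLx a * opLy w b p q g ^ 2 + opLy w b p q g * opLx a * opLy w b p q g
      + opLy w b p q g ^ 2 * opLx a
      = q • (1 : Module.End R (Fin 18 → R)) := by
  refine LinearMap.ext fun v => ?_
  apply ext18 <;> simp only [pow_succ, pow_zero, one_mul, Module.End.mul_apply,
    LinearMap.add_apply, Pi.add_apply,
    LinearMap.smul_apply, Module.End.one_apply, Pi.smul_apply, smul_eq_mul, opLy_apply,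
    opLx_apply] <;> grind

theorem op_gamma (hw : w ^ 2 = -1 - w) :
    (opLx a * opLy w b p q g) ^ 2 - opLy w b p q g ^ 2 * opLx a ^ 2
      = g • (1 : Module.End R (Fin 18 → R)) := by
  refine LinearMap.ext fun v => ?_
  apply ext18 <;> simp only [pow_succ, pow_zero, one_mul, Module.End.mul_apply,
    LinearMap.sub_apply, Pi.sub_apply,
    LinearMap.smul_apply, Module.End.one_apply, Pi.smul_apply, smul_eq_mul, opLy_apply,
    opLx_apply] <;> grind

/-- Coordinates of 1. -/
def e0 : Fin 18 → R := ![1, 0, 0, 0, 0, 0, 0, 0, 0, 0, 0, 0, 0, 0, 0, 0, 0, 0]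

/-- Coordinates of the cube of δ. -/
def dcube : Fin 18 → R :=
  ![-w * p * q, 0, 0, 0, (2 + w) * g, (1 - w) * p, 0, (1 - w) * q, 0,
    g, -p, 0, -q, 0, 0, 0, 0, -3]

/-- The operator of left multiplication by δ. -/
def opD : Module.End R (Fin 18 → R) :=
  opLy w b p q g * opLx a - w • (opLx a * opLy w b p q g)

theorem opD_cube (hw : w ^ 2 = -1 - w) : (opD w a b p q g ^ 3) e0 = dcube w p q g := by
  have h1 : opD w a b p q g e0 = ![0, 0, 0, 0, 0, 0, 0, 0, 0, 1, 0, 0, 0, 0, 0, 0, 0, 0] := by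
    apply ext18 <;> simp only [opD, Module.End.mul_apply, LinearMap.sub_apply, Pi.sub_apply,
      LinearMap.smul_apply, Pi.smul_apply, smul_eq_mul, opLy_apply, opLx_apply, e0,
      Matrix.cons_val] <;> ring
  have h2 : opD w a b p q g (opD w a b p q g e0) =
      ![g, -w * p, 0, -w * q, 0, 0, 0, 0, 0, 0, 0, 0, 0, w - 1, 0, 0, 0, 0] := by
    rw [h1]
    apply ext18 <;> simp only [opD, Module.End.mul_apply, LinearMap.sub_apply, Pi.sub_apply,
      LinearMap.smul_apply, Pi.smul_apply, smul_eq_mul, opLy_apply, opLx_apply,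
      Matrix.cons_val] <;> grind
  rw [pow_succ, pow_two, Module.End.mul_apply, Module.End.mul_apply, h2]
  apply ext18 <;> simp only [opD, Module.End.mul_apply, LinearMap.sub_apply, Pi.sub_apply,
    LinearMap.smul_apply, Pi.smul_apply, smul_eq_mul, opLy_apply, opLx_apply, dcube,
    Matrix.cons_val] <;> grind

theorem opRx_e0 : opRx w a p q g e0 = opLx a e0 := by
  apply ext18 <;> simp only [opLx_apply, opRx_apply, e0, Matrix.cons_val] <;> ring

theorem opRy_e0 : opRy b e0 = opLy w b p q g e0 := by
  apply ext18 <;> simp only [opLy_apply, opRy_apply, e0, Matrix.cons_val] <;> ring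

theorem opRx_dcube (hw : w ^ 2 = -1 - w) :
    opLx a (dcube w p q g) = opRx w a p q g (dcube w p q g) := by
  apply ext18 <;> simp only [opLx_apply, opRx_apply, dcube, Matrix.cons_val] <;> grind

theorem opRy_dcube (hw : w ^ 2 = -1 - w) :
    opLy w b p q g (dcube w p q g) = opRy b (dcube w p q g) := by
  apply ext18 <;> simp only [opLy_apply, opRy_apply, dcube, Matrix.cons_val] <;> grind

/-- The linear algebra heart: a central coordinate vector with vanishing last coordinate is
a multiple of the coordinate vector of 1. -/
theorem central_coords [IsDomain R] (hw : w ^ 2 = -1 - w) (h3 : (3 : R) ≠ 0)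
    (ha : a ≠ 0) (hb : b ≠ 0) (hg : g ≠ 0) (hab : 9 * a * b ≠ p * q)
    (v : Fin 18 → R) (hx : opLx a v = opRx w a p q g v) (hy : opLy w b p q g v = opRy b v)
    (h17 : v 17 = 0) : v = v 0 • e0 := by
  have X : ∀ i, opLx a v i = opRx w a p q g v i := fun i => by rw [hx]
  have Y : ∀ i, opLy w b p q g v i = opRy b v i := fun i => by rw [hy]
  have hw1 : (w - 1) ≠ 0 := by
    intro h
    apply h3
    have : w = 1 := by linear_combination h
    rw [this] at hw
    linear_combination hw
  have X1 := X 1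
  have X2 := X 2
  have X4 := X 4
  have X5 := X 5
  have X7 := X 7
  have X8 := X 8
  have X10 := X 10
  have X12 := X 12
  have X13 := X 13
  have X16 := X 16
  have Y3 := Y 3
  have Y4 := Y 4
  have Y7 := Y 7
  have Y8 := Y 8
  have Y12 := Y 12
  have Y13 := Y 13
  simp only [opLx_apply, opRx_apply, opLy_apply, opRy_apply, h17] at X1 X2 X4 X5 X7 X8 X10 X12 X13 X16 Y3 Y4 Y7 Y8 Y12 Y13
  have z10 : v 10 = 0 := by
    refine (mul_eq_zero.1 (?_ : 3 * v 10 = 0)).resolve_left h3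
    linear_combination (2 + w) * X13 - X8 + v 10 * hw
  have z12 : v 12 = 0 := by
    refine (mul_eq_zero.1 (?_ : 3 * v 12 = 0)).resolve_left h3
    linear_combination -(2 + w) * Y13 + Y8 + v 12 * hw
  have e1 : 3 * a * v 16 = p * v 14 := by linear_combination (2 + w) * X10 - X5 + a * v 16 * hw
  have e2 : 3 * b * v 14 = q * v 16 := by linear_combination -(2 + w) * Y12 + Y7 + b * v 14 * hw
  have z16 : v 16 = 0 := by
    refine (mul_eq_zero.1 (?_ : (9 * a * b - p * q) * v 16 = 0)).resolve_left (sub_ne_zero.2 hab)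
    linear_combination 3 * b * e1 + p * e2
  have z14 : v 14 = 0 := by
    refine (mul_eq_zero.1 (?_ : (3 * b) * v 14 = 0)).resolve_left (mul_ne_zero h3 hb)
    linear_combination e2 + q * z16
  have z2 : v 2 = 0 := by linear_combination X10 - (1 - w) * a * z16
  have z5 : v 5 = 0 := by linear_combination X13 - (1 - w) * z10
  have z6 : v 6 = 0 := by linear_combination -Y12 + (w - 1) * b * z14
  have z7 : v 7 = 0 := by linear_combination -Y13 + (w - 1) * z12
  have z11 : v 11 = 0 := by
    refine (mul_eq_zero.1 (?_ : g * v 11 = 0)).resolve_left hg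
    linear_combination X1 - (1 - w) * a * z7
  have z15 : v 15 = 0 := by
    refine (mul_eq_zero.1 (?_ : g * v 15 = 0)).resolve_left hg
    linear_combination -Y3 + (w - 1) * b * z5
  have z13 : v 13 = 0 := by
    refine (mul_eq_zero.1 (?_ : (3 * a) * v 13 = 0)).resolve_left (mul_ne_zero h3 ha)
    linear_combination (2 + w) * a * X16 - X2 + p * z11 + a * v 13 * hw
  have z8 : v 8 = 0 := by linear_combination X16 - (1 - w) * z13
  have z4 : v 4 = 0 := by
    refine (mul_eq_zero.1 (?_ : (w - 1) * v 4 = 0)).resolve_left hw1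
    linear_combination -X7 - w * q * z14
  have z9 : v 9 = 0 := by
    refine (mul_eq_zero.1 (?_ : 3 * v 9 = 0)).resolve_left h3
    linear_combination (1 - w) * X12 + (1 - w) * (z4 + q * z14) + v 9 * hw
  have z1 : v 1 = 0 := by
    refine (mul_eq_zero.1 (?_ : (w - 1) * v 1 = 0)).resolve_left hw1
    linear_combination -X4 + g * z14 - w * q * z11
  have z3 : v 3 = 0 := by
    refine (mul_eq_zero.1 (?_ : (w - 1) * v 3 = 0)).resolve_left hw1
    linear_combination Y4 + g * z16 - w * p * z15
  have z0 : v 0 = v 0 := rfl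
  apply ext18 <;> simp only [Pi.smul_apply, smul_eq_mul, e0, Matrix.cons_val, mul_one, mul_zero] <;>
    assumption

end identities

section modelside
variable {R A : Type*} [CommRing R] [Ring A] [Algebra R A]

/-- The linear combination of the 18 monomials with given coefficients. -/
def Sg (x y d : A) (v : Fin 18 → R) : A :=
  v 0 • 1 + v 1 • y + v 2 • (y * y)
  + v 3 • x + v 4 • (x * y) + v 5 • (x * (y * y))
  + v 6 • (x * x) + v 7 • (x * (x * y)) + v 8 • (x * (x * (y * y)))
  + v 9 • d + v 10 • (d * y) + v 11 • (d * (y * y))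
  + v 12 • (x * d) + v 13 • (x * (d * y)) + v 14 • (x * (d * (y * y)))
  + v 15 • (x * (x * d)) + v 16 • (x * (x * (d * y))) + v 17 • (x * (x * (d * (y * y))))

theorem Sg_add (x y d : A) (u v : Fin 18 → R) : Sg x y d (u + v) = Sg x y d u + Sg x y d v := by
  simp only [Sg, Pi.add_apply]
  module

theorem Sg_smul (x y d : A) (r : R) (v : Fin 18 → R) : Sg x y d (r • v) = r • Sg x y d v := by
  simp only [Sg, Pi.smul_apply, smul_eq_mul]
  module

theorem Sg_e0 (x y d : A) : Sg x y d (e0 : Fin 18 → R) = 1 := by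
  simp [Sg, e0]

theorem Sg_x (x y d : A) (a : R) (hx : x * (x * x) = a • 1) (v : Fin 18 → R) :
    x * Sg x y d v = Sg x y d (opLx a v) := by
  have hx' : ∀ z, x * (x * (x * z)) = a • z := fun z => by
    rw [← mul_assoc x x z, ← mul_assoc x (x * x) z, hx, smul_mul_assoc, one_mul]
  simp only [Sg, opLx_apply, mul_add, mul_smul_comm, hx, hx', mul_one]
  module

theorem Sg_y (x y d : A) (w b p q g : R) (hw : w ^ 2 = -1 - w)
    (hy : y * (y * y) = b • 1)
    (hyx : y * x = w • (x * y) + d) (hdx : d * x = (-1 - w) • (x * d) + p • 1)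
    (hyd : y * d = (-1 - w) • (d * y) + q • 1)
    (hdd : d * d = g • 1 - (1 - w) • (x * (d * y)) - w • (p • y + q • x))
    (v : Fin 18 → R) :
    y * Sg x y d v = Sg x y d (opLy w b p q g v) := by
  have hyx' : ∀ z, y * (x * z) = w • (x * (y * z)) + d * z := fun z => by
    rw [← mul_assoc, hyx]; simp only [add_mul, smul_mul_assoc, mul_assoc]
  have hdx' : ∀ z, d * (x * z) = (-1 - w) • (x * (d * z)) + p • z := fun z => by
    rw [← mul_assoc, hdx]; simp only [add_mul, smul_mul_assoc, mul_assoc, one_mul]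
  have hyd' : ∀ z, y * (d * z) = (-1 - w) • (d * (y * z)) + q • z := fun z => by
    rw [← mul_assoc, hyd]; simp only [add_mul, smul_mul_assoc, mul_assoc, one_mul]
  have hdd' : ∀ z, d * (d * z) =
      g • z - (1 - w) • (x * (d * (y * z))) - w • (p • (y * z) + q • (x * z)) := fun z => by
    rw [← mul_assoc, hdd]; simp only [add_mul, sub_mul, smul_mul_assoc, mul_assoc, one_mul]
  simp only [Sg, opLy_apply, mul_add, mul_sub, mul_smul_comm, hy, hyx, hdx, hyd, hdd,
    hyx', hdx', hyd', hdd', mul_one]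
  match_scalars <;> grind

end modelside

section algside
variable {k A : Type*} [Field k] [Ring A] [Algebra k A]

theorem alpha_x (x y : A) (r1 : x ^ 3 * y = y * x ^ 3) :
    Commute (x ^ 2 * y + x * y * x + y * x ^ 2) x := by
  simp only [Commute, SemiconjBy]
  linear_combination (norm := noncomm_ring) -r1

theorem alpha_y (x y : A) (r3 : x ^ 2 * y ^ 2 + (x * y) ^ 2 = y ^ 2 * x ^ 2 + (y * x) ^ 2) :
    Commute (x ^ 2 * y + x * y * x + y * x ^ 2) y := by
  simp only [Commute, SemiconjBy]
  linear_combination (norm := noncomm_ring) r3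

theorem beta_x (x y : A) (r3 : x ^ 2 * y ^ 2 + (x * y) ^ 2 = y ^ 2 * x ^ 2 + (y * x) ^ 2) :
    Commute (x * y ^ 2 + y * x * y + y ^ 2 * x) x := by
  simp only [Commute, SemiconjBy]
  linear_combination (norm := noncomm_ring) -r3

theorem beta_y (x y : A) (r2 : x * y ^ 3 = y ^ 3 * x) :
    Commute (x * y ^ 2 + y * x * y + y ^ 2 * x) y := by
  simp only [Commute, SemiconjBy]
  linear_combination (norm := noncomm_ring) r2

theorem delta_x (x y : A) (w : k) (hw : w ^ 2 = -1 - w) :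
    (y * x - w • (x * y)) * x = (-1 - w) • (x * (y * x - w • (x * y))) +
      (x ^ 2 * y + x * y * x + y * x ^ 2) := by
  simp only [pow_two, mul_sub, sub_mul, mul_smul_comm, smul_mul_assoc, mul_assoc]
  match_scalars <;> grind

theorem y_delta (x y : A) (w : k) (hw : w ^ 2 = -1 - w) :
    y * (y * x - w • (x * y)) = (-1 - w) • ((y * x - w • (x * y)) * y) +
      (x * y ^ 2 + y * x * y + y ^ 2 * x) := by
  simp only [pow_two, mul_sub, sub_mul, mul_smul_comm, smul_mul_assoc, mul_assoc]
  match_scalars <;> grind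

theorem gamma_eq (x y d : A) (w : k) (hw : w ^ 2 = -1 - w) (hd : d = y * x - w • (x * y))
    (r3 : x ^ 2 * y ^ 2 + (x * y) ^ 2 = y ^ 2 * x ^ 2 + (y * x) ^ 2) :
    (x * y) ^ 2 - y ^ 2 * x ^ 2 = d * d + (1 - w) • (x * (d * y)) +
      w • ((x ^ 2 * y + x * y * x + y * x ^ 2) * y + (x * y ^ 2 + y * x * y + y ^ 2 * x) * x) := by
  subst hd
  have r3' : (1 + w) • (x ^ 2 * y ^ 2 + (x * y) ^ 2) = (1 + w) • (y ^ 2 * x ^ 2 + (y * x) ^ 2) := by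
    rw [r3]
  rw [← sub_eq_zero] at r3' ⊢
  rw [← r3']
  simp only [pow_two, mul_sub, sub_mul, mul_add, add_mul, mul_smul_comm, smul_mul_assoc, mul_assoc]
  match_scalars <;> grind

theorem gamma_comm (x y d α β : A) (w : k) (hw : w ^ 2 = -1 - w)
    (hyx : y * x = w • (x * y) + d) (hdx : d * x = (-1 - w) • (x * d) + α)
    (hyd : y * d = (-1 - w) • (d * y) + β)
    (ax : Commute α x) (ay : Commute α y) (bx : Commute β x) (hby : Commute β y)
    (ad : Commute α d) (bd : Commute β d) :
    Commute (d * d + (1 - w) • (x * (d * y)) + w • (α * y + β * x)) x ∧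
    Commute (d * d + (1 - w) • (x * (d * y)) + w • (α * y + β * x)) y := by
  have hyx' : ∀ z, y * (x * z) = w • (x * (y * z)) + d * z := fun z => by
    rw [← mul_assoc, hyx]; simp only [add_mul, smul_mul_assoc, mul_assoc]
  have hdx' : ∀ z, d * (x * z) = (-1 - w) • (x * (d * z)) + α * z := fun z => by
    rw [← mul_assoc, hdx]; simp only [add_mul, smul_mul_assoc, mul_assoc]
  have hyd' : ∀ z, y * (d * z) = (-1 - w) • (d * (y * z)) + β * z := fun z => by
    rw [← mul_assoc, hyd]; simp only [add_mul, smul_mul_assoc, mul_assoc]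
  simp only [Commute, SemiconjBy] at *
  constructor <;>
  · simp only [mul_add, add_mul, mul_smul_comm, smul_mul_assoc, mul_assoc, hyx, hdx, hyd,
      hyx', hdx', hyd', ax, ay, bx, hby, ad, bd, smul_add, smul_smul]
    match_scalars <;> grind

end algside
noncomputable section

section final
variable {k : Type*} [Field k]

theorem g_r1 : gx k ^ 3 * gy k = gy k * gx k ^ 3 := by
  simpa [gx, gy] using RingQuot.mkAlgHom_rel k (GCRel.rel1 (k := k))

theorem g_r2 : gx k * gy k ^ 3 = gy k ^ 3 * gx k := by
  simpa [gx, gy] using RingQuot.mkAlgHom_rel k (GCRel.rel2 (k := k))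

theorem g_r3 : gx k ^ 2 * gy k ^ 2 + (gx k * gy k) ^ 2 =
    gy k ^ 2 * gx k ^ 2 + (gy k * gx k) ^ 2 := by
  simpa [gx, gy] using RingQuot.mkAlgHom_rel k (GCRel.rel3 (k := k))

theorem g_induction {P : GCA k → Prop} (hs : ∀ r, P (algebraMap k _ r)) (hx : P (gx k))
    (hy : P (gy k)) (hadd : ∀ u v, P u → P v → P (u + v)) (hmul : ∀ u v, P u → P v → P (u * v))
    (z : GCA k) : P z := by
  obtain ⟨f, rfl⟩ := RingQuot.mkAlgHom_surjective k (GCRel k) z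
  induction f using FreeAlgebra.induction with
  | grade0 r => simpa using hs r
  | grade1 i => fin_cases i; exacts [hx, hy]
  | mul u v hu hv => simpa using hmul _ _ hu hv
  | add u v hu hv => simpa using hadd _ _ hu hv

theorem mem_center_of {c : GCA k} (hx : Commute c (gx k)) (hy : Commute c (gy k)) :
    c ∈ Subalgebra.center k (GCA k) := by
  rw [Subalgebra.mem_center_iff]
  intro z
  change Commute z c
  induction z using g_induction with
  | hs r => exact Algebra.commutes r c
  | hx => exact hx.symm
  | hy => exact hy.symm
  | hadd u v hu hv => exact hu.add_left hv
  | hmul u v hu hv => exact hu.mul_left hv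

theorem gδ_eq (ω : k) : gδ k ω = gy k * gx k - ω • (gx k * gy k) := by
  rw [gδ, Algebra.smul_def]

theorem gens_central (ω : k) (hw : ω ^ 2 = -1 - ω) (i : Fin 5) :
    (![gx k ^ 3, gy k ^ 3, gα k, gβ k, gγ k] : Fin 5 → GCA k) i ∈
      Subalgebra.center k (GCA k) := by
  have ax := alpha_x (gx k) (gy k) g_r1
  have ay := alpha_y (gx k) (gy k) g_r3
  have bx := beta_x (gx k) (gy k) g_r3
  have hby := beta_y (gx k) (gy k) g_r2
  have ad : ∀ c, Commute c (gx k) → Commute c (gy k) →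
      Commute c (gy k * gx k - ω • (gx k * gy k)) := fun c hx hy =>
    (hy.mul_right hx).sub_right ((hx.mul_right hy).smul_right ω)
  have hg := gamma_eq (gx k) (gy k) _ ω hw rfl g_r3
  have hgc := gamma_comm (gx k) (gy k) (gy k * gx k - ω • (gx k * gy k)) _ _ ω hw (by abel)
    (delta_x _ _ ω hw) (y_delta _ _ ω hw) ax ay bx hby (ad _ ax ay) (ad _ bx hby)
  rw [← hg] at hgc
  fin_cases i
  · exact mem_center_of ((Commute.refl _).pow_left 3) g_r1
  · exact mem_center_of g_r2.symm ((Commute.refl _).pow_left 3)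
  · exact mem_center_of ax ay
  · exact mem_center_of bx hby
  · exact mem_center_of hgc.1 hgc.2

/-- Evaluation of polynomials in the five central generators. -/
def gev (ω : k) (hw : ω ^ 2 = -1 - ω) : MvPolynomial (Fin 5) k →ₐ[k] GCA k :=
  (Subalgebra.center k (GCA k)).val.comp
    (MvPolynomial.aeval fun i => ⟨_, gens_central ω hw i⟩)

theorem gev_X (ω : k) (hw : ω ^ 2 = -1 - ω) (i : Fin 5) :
    gev ω hw (MvPolynomial.X i) =
      (![gx k ^ 3, gy k ^ 3, gα k, gβ k, gγ k] : Fin 5 → GCA k) i := by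
  simp [gev]

theorem gev_comm (ω : k) (hw : ω ^ 2 = -1 - ω) (f : MvPolynomial (Fin 5) k) (z : GCA k) :
    gev ω hw f * z = z * gev ω hw f := by
  have : gev ω hw f ∈ Subalgebra.center k (GCA k) := by simp [gev]
  exact ((Subalgebra.mem_center_iff.1 this) z).symm

theorem mem_adjoin_iff (ω : k) (hw : ω ^ 2 = -1 - ω) (s : GCA k) :
    s ∈ Algebra.adjoin k ({gx k ^ 3, gy k ^ 3, gα k, gβ k, gγ k} : Set (GCA k)) ↔
      ∃ f, gev ω hw f = s := by
  constructor
  · intro h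
    have hle : Algebra.adjoin k ({gx k ^ 3, gy k ^ 3, gα k, gβ k, gγ k} : Set (GCA k)) ≤
        (gev ω hw).range := by
      rw [Algebra.adjoin_le_iff]
      rintro t (rfl | rfl | rfl | rfl | rfl)
      exacts [⟨_, gev_X ω hw 0⟩, ⟨_, gev_X ω hw 1⟩, ⟨_, gev_X ω hw 2⟩, ⟨_, gev_X ω hw 3⟩,
        ⟨_, gev_X ω hw 4⟩]
    exact hle h
  · rintro ⟨f, rfl⟩
    induction f using MvPolynomial.induction_on with
    | C r =>
      rw [← MvPolynomial.algebraMap_eq, AlgHom.commutes]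
      exact Subalgebra.algebraMap_mem _ r
    | add f g hf hg => rw [map_add]; exact add_mem hf hg
    | mul_X f i hf =>
      rw [map_mul, gev_X]
      refine mul_mem hf (Algebra.subset_adjoin ?_)
      fin_cases i <;> simp

open MvPolynomial in
/-- The representation of the algebra on the free module of rank 18. -/
def grep (ω : k) (hw : (C ω : MvPolynomial (Fin 5) k) ^ 2 = -1 - C ω) :
    GCA k →ₐ[k] Module.End (MvPolynomial (Fin 5) k) (Fin 18 → MvPolynomial (Fin 5) k) :=
  RingQuot.liftAlgHom k ⟨FreeAlgebra.lift k ![opLx (X 0), opLy (C ω) (X 1) (X 2) (X 3) (X 4)], by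
    have h1 := opLx_cube (X 0 : MvPolynomial (Fin 5) k)
    have h2 := opLy_cube (C ω) (X 1) (X 2) (X 3) (X 4) hw
    have h3 := op_alpha (C ω) (X 0) (X 1) (X 2) (X 3) (X 4) hw
    intro u v h
    cases h with
    | rel1 => simp [h1]
    | rel2 => simp [h2]
    | rel3 =>
      simp only [map_add, map_mul, map_pow, FreeAlgebra.lift_ι_apply, Matrix.cons_val]
      generalize opLy (C ω : MvPolynomial (Fin 5) k) (X 1) (X 2) (X 3) (X 4) = Y at *
      generalize opLx (X 0 : MvPolynomial (Fin 5) k) = Z at *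
      have h4 : (Z ^ 2 * Y + Z * Y * Z + Y * Z ^ 2) * Y = Y * (Z ^ 2 * Y + Z * Y * Z + Y * Z ^ 2) := by
        rw [h3, smul_mul_assoc, mul_smul_comm, one_mul, mul_one]
      linear_combination (norm := noncomm_ring) h4⟩

open MvPolynomial in
theorem grep_x (ω : k) (hw : (C ω : MvPolynomial (Fin 5) k) ^ 2 = -1 - C ω) :
    grep ω hw (gx k) = opLx (X 0) := by
  simp [grep, gx]

open MvPolynomial in
theorem grep_y (ω : k) (hw : (C ω : MvPolynomial (Fin 5) k) ^ 2 = -1 - C ω) :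
    grep ω hw (gy k) = opLy (C ω) (X 1) (X 2) (X 3) (X 4) := by
  simp [grep, gy]

open MvPolynomial in
theorem grep_gev (ω : k) (hw0 : ω ^ 2 = -1 - ω)
    (hw : (C ω : MvPolynomial (Fin 5) k) ^ 2 = -1 - C ω) (f : MvPolynomial (Fin 5) k) :
    grep ω hw (gev ω hw0 f) = f • 1 := by
  induction f using MvPolynomial.induction_on with
  | C r =>
    rw [← MvPolynomial.algebraMap_eq, AlgHom.commutes, AlgHom.commutes, algebraMap_smul,
      Algebra.algebraMap_eq_smul_one]
  | add f g hf hg => rw [map_add, map_add, hf, hg, add_smul]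
  | mul_X f i hf =>
    have : grep ω hw (gev ω hw0 (X i)) = (X i : MvPolynomial (Fin 5) k) • 1 := by
      rw [gev_X]
      fin_cases i
      · simp [grep_x, opLx_cube]
      · simp [grep_y, opLy_cube, hw]
      · simp [gα, grep_x, grep_y, op_alpha _ _ _ _ _ _ hw]
      · simp [gβ, grep_x, grep_y, op_beta _ _ _ _ _ _ hw]
      · simp [gγ, grep_x, grep_y, op_gamma _ _ _ _ _ _ hw]
    rw [map_mul, map_mul, hf, this, smul_mul_smul_comm, one_mul]

open MvPolynomial in
theorem grep_δ (ω : k) (hw : (C ω : MvPolynomial (Fin 5) k) ^ 2 = -1 - C ω) :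
    grep ω hw (gδ k ω) = opD (C ω) (X 0) (X 1) (X 2) (X 3) (X 4) := by
  rw [gδ_eq, map_sub, map_smul, map_mul, map_mul, grep_x, grep_y, opD,
    ← MvPolynomial.algebraMap_eq, algebraMap_smul]

open MvPolynomial in
theorem grep_commute (ω : k) (hw : (C ω : MvPolynomial (Fin 5) k) ^ 2 = -1 - C ω) (z : GCA k) :
    Commute (grep ω hw z) (opRx (C ω) (X 0) (X 2) (X 3) (X 4)) ∧
    Commute (grep ω hw z) (opRy (X 1)) := by
  induction z using g_induction with
  | hs r => rw [AlgHom.commutes]; exact ⟨Algebra.commutes _ _, Algebra.commutes _ _⟩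
  | hx => rw [grep_x]; exact ⟨opLxRx _ _ _ _ _, opLxRy _ _⟩
  | hy => rw [grep_y]; exact ⟨opLyRx _ _ _ _ _ _ hw, opLyRy _ _ _ _ _⟩
  | hadd u v hu hv => rw [map_add]; exact ⟨hu.1.add_left hv.1, hu.2.add_left hv.2⟩
  | hmul u v hu hv => rw [map_mul]; exact ⟨hu.1.mul_left hv.1, hu.2.mul_left hv.2⟩

/-- The algebra as an algebra over the polynomial ring in the central generators. -/
abbrev galg (ω : k) (hw : ω ^ 2 = -1 - ω) : Algebra (MvPolynomial (Fin 5) k) (GCA k) :=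
  (gev ω hw).toRingHom.toAlgebra' (gev_comm ω hw)

open MvPolynomial in
theorem Sg_grep (ω : k) (hw0 : ω ^ 2 = -1 - ω)
    (hw : (C ω : MvPolynomial (Fin 5) k) ^ 2 = -1 - C ω) (z : GCA k) :
    letI := galg ω hw0
    ∀ v : Fin 18 → MvPolynomial (Fin 5) k,
    z * Sg (gx k) (gy k) (gδ k ω) v = Sg (gx k) (gy k) (gδ k ω) (grep ω hw z v) := by
  letI := galg ω hw0
  have sm : ∀ (f : MvPolynomial (Fin 5) k) (u : GCA k), f • u = gev ω hw0 f * u := fun f u => rfl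
  have smX : ∀ (i : Fin 5) (u : GCA k), (X i : MvPolynomial (Fin 5) k) • u =
      (![gx k ^ 3, gy k ^ 3, gα k, gβ k, gγ k] : Fin 5 → GCA k) i * u := fun i u => by
    rw [sm, gev_X]
  have smC : ∀ (r : k) (u : GCA k), (C r : MvPolynomial (Fin 5) k) • u = r • u := fun r u => by
    rw [sm, ← MvPolynomial.algebraMap_eq, AlgHom.commutes, Algebra.smul_def]
  intro v
  induction z using g_induction generalizing v with
  | hs r =>
    rw [AlgHom.commutes, Module.algebraMap_end_apply, ← algebraMap_smul (MvPolynomial (Fin 5) k) r v,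
      Sg_smul, MvPolynomial.algebraMap_eq, smC, Algebra.smul_def]
  | hx =>
    rw [grep_x]
    apply Sg_x
    rw [smX]
    simp [pow_succ, mul_assoc]
  | hy =>
    rw [grep_y]
    have hone : ∀ s : k, (-1 - C s : MvPolynomial (Fin 5) k) = C (-1 - s) := by simp
    have hone' : ∀ s : k, (1 - C s : MvPolynomial (Fin 5) k) = C (1 - s) := by simp
    apply Sg_y _ _ _ _ _ _ _ _ hw
    · rw [smX]
      simp [pow_succ, mul_assoc]
    · rw [smC, gδ_eq]; abel
    · rw [hone, smC, smX, gδ_eq, delta_x _ _ ω hw0]; simp [gα]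
    · rw [hone, smC, smX, gδ_eq, y_delta _ _ ω hw0]; simp [gβ]
    · rw [hone', smC, smC, smX, smX, smX]
      have := gamma_eq (gx k) (gy k) _ ω hw0 (gδ_eq ω) g_r3
      simp only [Matrix.cons_val, mul_one]
      rw [gγ, this, gα, gβ]
      abel
  | hadd u v hu hv => rw [add_mul, hu, hv, map_add, LinearMap.add_apply, Sg_add]
  | hmul u v hu hv => rw [mul_assoc, hv, hu, map_mul, Module.End.mul_apply]

end final

end

theorem stmt8 (k : Type*) [Field k] (h2 : (2 : k) ≠ 0) (h3 : (3 : k) ≠ 0)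
    (ω : k) (hω : IsPrimitiveRoot ω 3) :
    ∀ z : Subalgebra.center k (GCA k),
      ∃! c : Algebra.adjoin k ({gx k ^ 3, gy k ^ 3, gα k, gβ k, gγ k} : Set (GCA k)) ×
          Algebra.adjoin k ({gx k ^ 3, gy k ^ 3, gα k, gβ k, gγ k} : Set (GCA k)),
        (z : GCA k) = (c.1 : GCA k) * 1 + (c.2 : GCA k) * gδ k ω ^ 3 := by
  have hw0 : ω ^ 2 = -1 - ω := by
    have := hω.geom_sum_eq_zero (by norm_num)
    simp only [Finset.sum_range_succ, Finset.sum_range_zero] at this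
    linear_combination this
  have hw : (MvPolynomial.C ω : MvPolynomial (Fin 5) k) ^ 2 = -1 - MvPolynomial.C ω := by
    rw [← map_pow, hw0]; simp
  letI := galg ω hw0
  have sm : ∀ (f : MvPolynomial (Fin 5) k) (u : GCA k), f • u = gev ω hw0 f * u := fun f u => rfl
  have key : ∀ u : GCA k, u = Sg (gx k) (gy k) (gδ k ω) (grep ω hw u e0) := fun u => by
    rw [← Sg_grep ω hw0 hw u, Sg_e0, mul_one]
  have hD : grep ω hw (gδ k ω ^ 3) e0 = dcube (MvPolynomial.C ω) (MvPolynomial.X 2)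
      (MvPolynomial.X 3) (MvPolynomial.X 4) := by
    rw [map_pow, grep_δ, opD_cube _ _ _ _ _ _ hw]
  have h3' : (3 : MvPolynomial (Fin 5) k) ≠ 0 := by
    rw [← map_ofNat (MvPolynomial.C (σ := Fin 5) (R := k)) 3]
    simpa using h3
  have hcoord : ∀ f1 f2 : MvPolynomial (Fin 5) k,
      grep ω hw (gev ω hw0 f1 * 1 + gev ω hw0 f2 * gδ k ω ^ 3) e0 =
        f1 • e0 + f2 • dcube (MvPolynomial.C ω) (MvPolynomial.X 2)
      (MvPolynomial.X 3) (MvPolynomial.X 4) := fun f1 f2 => by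
    rw [mul_one, map_add, map_mul, grep_gev, grep_gev, LinearMap.add_apply, Module.End.mul_apply,
      hD]
    simp
  rintro ⟨z, hz⟩
  rw [Subalgebra.mem_center_iff] at hz
  set F := grep ω hw z e0 with hF
  have hFx : opLx (MvPolynomial.X 0) F = opRx (MvPolynomial.C ω) (MvPolynomial.X 0)
      (MvPolynomial.X 2) (MvPolynomial.X 3) (MvPolynomial.X 4) F := by
    have h1 := congrArg (fun u => grep ω hw u e0) (hz (gx k))
    simp only [map_mul, Module.End.mul_apply, grep_x] at h1
    rw [← hF] at h1
    rw [h1, ← opRx_e0 (MvPolynomial.C ω) _ (MvPolynomial.X 2) (MvPolynomial.X 3)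
      (MvPolynomial.X 4), ← Module.End.mul_apply, (grep_commute ω hw z).1.eq,
      Module.End.mul_apply]
  have hFy : opLy (MvPolynomial.C ω) (MvPolynomial.X 1)
      (MvPolynomial.X 2) (MvPolynomial.X 3) (MvPolynomial.X 4) F = opRy (MvPolynomial.X 1) F := by
    have h1 := congrArg (fun u => grep ω hw u e0) (hz (gy k))
    simp only [map_mul, Module.End.mul_apply, grep_y] at h1
    rw [← hF] at h1
    rw [h1, ← opRy_e0 (MvPolynomial.C ω) _ (MvPolynomial.X 2) (MvPolynomial.X 3)
      (MvPolynomial.X 4), ← Module.End.mul_apply, (grep_commute ω hw z).2.eq,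
      Module.End.mul_apply]
  -- the coefficient of the cube of δ
  set c2 : MvPolynomial (Fin 5) k := MvPolynomial.C (-(3 : k)⁻¹) * F 17 with hc2
  have hc3 : c2 * (-3) = F 17 := by
    have : (MvPolynomial.C (-(3 : k)⁻¹) : MvPolynomial (Fin 5) k) * (-3) = 1 := by
      rw [← map_ofNat (MvPolynomial.C (σ := Fin 5) (R := k)) 3, ← map_neg, ← map_mul, neg_mul_neg,
        inv_mul_cancel₀ h3, map_one]
    rw [hc2]
    linear_combination F 17 * this
  have hmain := central_coords (MvPolynomial.C ω) (MvPolynomial.X 0) (MvPolynomial.X 1)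
    (MvPolynomial.X 2) (MvPolynomial.X 3) (MvPolynomial.X 4) hw h3'
    (MvPolynomial.X_ne_zero 0) (MvPolynomial.X_ne_zero 1) (MvPolynomial.X_ne_zero 4)
    (by
      intro h
      have h9 := congrArg (MvPolynomial.eval (![1, 1, 0, 0, 0] : Fin 5 → k)) h
      simp at h9
      apply h3
      have : (3 : k) * 3 = 0 := by linear_combination h9
      simpa using this)
    (F - c2 • dcube (MvPolynomial.C ω) (MvPolynomial.X 2) (MvPolynomial.X 3) (MvPolynomial.X 4))
    (by rw [map_sub, map_sub, map_smul, map_smul, hFx, opRx_dcube _ _ _ _ _ hw])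
    (by rw [map_sub, map_sub, map_smul, map_smul, hFy, opRy_dcube _ _ _ _ _ hw])
    (by
      rw [Pi.sub_apply, Pi.smul_apply, smul_eq_mul, ← hc3]
      simp [dcube])
  rw [sub_eq_iff_eq_add] at hmain
  obtain ⟨c1, hmain⟩ : ∃ c1 : MvPolynomial (Fin 5) k, F = c1 • e0 + c2 • dcube (MvPolynomial.C ω)
      (MvPolynomial.X 2) (MvPolynomial.X 3) (MvPolynomial.X 4) := ⟨_, hmain⟩
  refine ⟨(⟨gev ω hw0 c1, (mem_adjoin_iff ω hw0 _).2 ⟨_, rfl⟩⟩,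
    ⟨gev ω hw0 c2, (mem_adjoin_iff ω hw0 _).2 ⟨_, rfl⟩⟩), ?_, ?_⟩
  · change z = gev ω hw0 c1 * 1 + gev ω hw0 c2 * gδ k ω ^ 3
    rw [key z, key (gev ω hw0 c1 * 1 + gev ω hw0 c2 * gδ k ω ^ 3), hcoord, ← hF, ← hmain]
  · rintro ⟨⟨d1, m1⟩, ⟨d2, m2⟩⟩ he
    obtain ⟨f1, rfl⟩ := (mem_adjoin_iff ω hw0 _).1 m1
    obtain ⟨f2, rfl⟩ := (mem_adjoin_iff ω hw0 _).1 m2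
    change z = gev ω hw0 f1 * 1 + gev ω hw0 f2 * gδ k ω ^ 3 at he
    have h4 := congrArg (fun u => grep ω hw u e0) he
    simp only [hcoord] at h4
    rw [← hF, hmain] at h4
    have h5 := congrFun h4 17
    have h6 := congrFun h4 0
    simp only [Pi.add_apply, Pi.smul_apply, smul_eq_mul, e0, dcube, Matrix.cons_val] at h5 h6
    have e2 : c2 = f2 := by
      refine mul_right_cancel₀ h3' ?_
      linear_combination -h5
    subst e2
    have e1 : c1 = f1 := by linear_combination h6
    subst e1
    rfl
end

section
/- Let Δ_A = −27x⁶y⁶ + α²β² + 18x³y³αβ − 4x³β³ − 4y³α³, a central element of the binary cubic generic Clifford algebra A, and let A_Δ denote the localization of A at the central multiplicative set {Δ_Aⁿ : n ≥ 0}. Then A_Δ is an Azumaya algebra over its center. -/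
/-- The discriminant element Δ_A = −27x⁶y⁶ + α²β² + 18x³y³αβ − 4x³β³ − 4y³α³ of `A`. -/
noncomputable def gΔ (k : Type*) [Field k] : GCA k :=
  -27 * (gx k ^ 6 * gy k ^ 6) + gα k ^ 2 * gβ k ^ 2 +
    18 * (gx k ^ 3 * gy k ^ 3) * (gα k * gβ k) -
    4 * gx k ^ 3 * gβ k ^ 3 - 4 * gy k ^ 3 * gα k ^ 3

open TensorProduct in
/-- The canonical map `B ⊗[R] Bᵐᵒᵖ →ₗ[R] End_R(B)`, `a ⊗ b ↦ (x ↦ a * x * b)`;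
an algebra `B` is Azumaya over `R` iff `B` is a finitely generated projective faithful
`R`-module and this map is bijective. -/
noncomputable def mulLR (R B : Type*) [CommRing R] [Ring B] [Algebra R B] :
    B ⊗[R] Bᵐᵒᵖ →ₗ[R] (B →ₗ[R] B) :=
  TensorProduct.lift <| LinearMap.mk₂ R
    (fun a b =>
      { toFun := fun m => a * m * b.unop
        map_add' := fun u v => by simp [mul_add, add_mul]
        map_smul' := fun r u => by simp [mul_smul_comm, smul_mul_assoc] })
    (fun a₁ a₂ b => by ext m; simp [add_mul])
    (fun r a b => by ext m; simp [smul_mul_assoc])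
    (fun a b₁ b₂ => by ext m; simp [mul_add])
    (fun r a b => by ext m; simp [mul_smul_comm])


set_option linter.unusedSimpArgs false

section ids
variable {R B : Type*} [CommRing R] [Ring B] [Algebra R B]

/-- PBW rules -/
lemma pbw (x y : B) (a b ω : R) (hω : ω^2+ω+1=0)
   (ha : x^2*y+x*y*x+y*x^2 = a • 1) (hb : x*y^2+y*x*y+y^2*x = b • 1) (d : B) (hd : d = y*x - ω • (x*y)) :
   y*x = ω • (x*y) + d ∧ d*x = ω^2 • (x*d) + a • 1 ∧ y*d = ω^2 • (d*y) + b • 1 := by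
  subst hd
  refine ⟨by simp, ?_, ?_⟩
  · rw [← ha]
    simp only [pow_two, mul_assoc, mul_sub, sub_mul, mul_add, add_mul, mul_smul_comm, smul_mul_assoc, smul_sub, smul_smul]
    match_scalars <;> grind
  · rw [← hb]
    simp only [pow_two, mul_assoc, mul_sub, sub_mul, mul_add, add_mul, mul_smul_comm, smul_mul_assoc, smul_sub, smul_smul]
    match_scalars <;> grind

lemma assoc_rule {p q r s : B} (h : p*q = r*s) (c : B) : p*(q*c) = r*(s*c) := by
  rw [← mul_assoc, h, mul_assoc]

section
variable (x y d : B) (a b ω : R) (hω : ω^2+ω+1=0)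
  (h1 : y*x = ω • (x*y) + d) (h2 : d*x = ω^2 • (x*d) + a • (1:B)) (h3 : y*d = ω^2 • (d*y) + b • (1:B))
include hω h1 h2 h3

lemma ids (u m g : B) (hu : u = (ω^2*a)•(1:B) + (ω-ω^2)•(x*d)) (hm : m = (ω*b)•x + d*d) (hg : g = m + ω^2•(u*y)) :
   x*u = ω•(u*x) ∧ d*u=ω^2•(u*d) ∧ y*u = u*y + (ω-ω^2)•m ∧ u*m = ω^2•(m*u) ∧ x*g=g*x ∧ y*g=g*y := by
  have h1' : ∀ c, y*(x*c) = ω • (x*(y*c)) + d*c := fun c => by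
    rw [← mul_assoc, h1]; simp [add_mul, mul_assoc]
  have h2' : ∀ c, d*(x*c) = ω^2 • (x*(d*c)) + a • c := fun c => by
    rw [← mul_assoc, h2]; simp [add_mul, mul_assoc]
  have h3' : ∀ c, y*(d*c) = ω^2 • (d*(y*c)) + b • c := fun c => by
    rw [← mul_assoc, h3]; simp [add_mul, mul_assoc]
  subst hg hm hu
  refine ⟨?_, ?_, ?_, ?_, ?_, ?_⟩ <;>
  · simp only [mul_assoc, mul_one, one_mul, mul_add, add_mul, mul_smul_comm, smul_mul_assoc, smul_add, smul_smul, h1, h2, h3, h1', h2', h3']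
    match_scalars <;> grind

lemma ids2 (u v : B) (X Y : R) (hX : x*(x*x) = X•(1:B)) (hY : y*(y*y) = Y•(1:B))
   (hu : u = (ω^2*a)•(1:B) + (ω-ω^2)•(x*d)) 
   (hv : v = (ω*a)•(1:B) + (ω^2-ω)•(x*(d+(ω-ω^2)•(x*y)))) :
   u*(u*u)+v*(v*v) = (27*X^2*Y-9*X*a*b+2*a^3)•(1:B) := by
  have h1' : ∀ c, y*(x*c) = ω • (x*(y*c)) + d*c := fun c => by
    rw [← mul_assoc, h1]; simp [add_mul, mul_assoc]
  have h2' : ∀ c, d*(x*c) = ω^2 • (x*(d*c)) + a • c := fun c => by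
    rw [← mul_assoc, h2]; simp [add_mul, mul_assoc]
  have h3' : ∀ c, y*(d*c) = ω^2 • (d*(y*c)) + b • c := fun c => by
    rw [← mul_assoc, h3]; simp [add_mul, mul_assoc]
  have hX' : ∀ c, x*(x*(x*c)) = X•c := fun c => by
    rw [← mul_assoc, ← mul_assoc, mul_assoc x x x, hX]; simp
  subst hu hv
  simp only [mul_assoc, mul_one, one_mul, mul_add, add_mul, mul_smul_comm, smul_mul_assoc, smul_add, smul_smul, h1, h2, h3, h1', h2', h3', hX', hX, hY]
  clear h1 h2 h3 h1' h2' h3' hX' hY hX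
  match_scalars
  all_goals grind
end
end ids
section cas
variable {R E : Type*} [CommRing R] [Ring E] [Algebra R E]

lemma casimir (ω X U : R) (hω : ω^2+ω+1=0) (x1 x2 u1 u2 P Q : E)
  (hx1 : x1*(x1*x1) = X•(1:E)) (hx2 : x2*(x2*x2) = X•(1:E))
  (hu1 : u1*(u1*u1) = U•(1:E)) (hu2 : u2*(u2*u2) = U•(1:E))
  (c1 : u1*x1 = ω^2•(x1*u1)) (c2 : u2*x2 = ω•(x2*u2))
  (c3 : x2*x1=x1*x2) (c4 : u1*x2=x2*u1) (c5 : u2*x1=x1*u2) (c6 : u2*u1=u1*u2)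
  (hP : P = X•(1:E) + x1*(x2*x2) + x1*(x1*x2)) (hQ : Q = U•(1:E) + u1*(u2*u2) + u1*(u1*u2)) :
  x1*(P*Q) = x2*(P*Q) ∧ u1*(P*Q)=u2*(P*Q) ∧ 
   (U•(P*Q) + u1*(P*Q*(u1*u1)) + (u1*u1)*(P*Q*u1) = (3*X*U)•Q) ∧
   (X•Q + x1*(Q*(x1*x1)) + (x1*x1)*(Q*x1) = (3*X*U)•(1:E)) := by
  have ax1 : ∀ c, x1*(x1*(x1*c)) = X•c := fun c => by
    rw [← mul_assoc, ← mul_assoc, mul_assoc x1 x1 x1, hx1]; simp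
  have ax2 : ∀ c, x2*(x2*(x2*c)) = X•c := fun c => by
    rw [← mul_assoc, ← mul_assoc, mul_assoc x2 x2 x2, hx2]; simp
  have au1 : ∀ c, u1*(u1*(u1*c)) = U•c := fun c => by
    rw [← mul_assoc, ← mul_assoc, mul_assoc u1 u1 u1, hu1]; simp
  have au2 : ∀ c, u2*(u2*(u2*c)) = U•c := fun c => by
    rw [← mul_assoc, ← mul_assoc, mul_assoc u2 u2 u2, hu2]; simp
  have a1 : ∀ c, u1*(x1*c) = ω^2•(x1*(u1*c)) := fun c => by
    rw [← mul_assoc, c1]; simp [mul_assoc]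
  have a2 : ∀ c, u2*(x2*c) = ω•(x2*(u2*c)) := fun c => by
    rw [← mul_assoc, c2]; simp [mul_assoc]
  have a3 : ∀ c, x2*(x1*c) = x1*(x2*c) := fun c => by
    rw [← mul_assoc, c3]; simp [mul_assoc]
  have a4 : ∀ c, u1*(x2*c) = x2*(u1*c) := fun c => by
    rw [← mul_assoc, c4]; simp [mul_assoc]
  have a5 : ∀ c, u2*(x1*c) = x1*(u2*c) := fun c => by
    rw [← mul_assoc, c5]; simp [mul_assoc]
  have a6 : ∀ c, u2*(u1*c) = u1*(u2*c) := fun c => by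
    rw [← mul_assoc, c6]; simp [mul_assoc]
  subst hP hQ
  refine ⟨?_, ?_, ?_, ?_⟩
  all_goals
    simp only [mul_assoc, mul_one, one_mul, mul_add, add_mul, mul_smul_comm, smul_mul_assoc, smul_add, smul_smul,
      c1,c2,c3,c4,c5,c6,a1,a2,a3,a4,a5,a6,ax1,ax2,au1,au2,hx1,hx2,hu1,hu2]
    clear c1 c2 c3 c4 c5 c6 a1 a2 a3 a4 a5 a6 ax1 ax2 au1 au2 hx1 hx2 hu1 hu2
    match_scalars <;> grind
end cas

section field
variable {K : Type*} [Field K]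

lemma interp (c0 c1 c2 c3 c4 c5 c6 ω : K) (h2 : (2:K) ≠ 0) (h3 : (3:K) ≠ 0) (hω : ω^2+ω+1=0)
  (G : ∀ z : K, (z = 0 ∨ z^6=1) → c0+c1*z+c2*z^2+c3*z^3+c4*z^4+c5*z^5+c6*z^6 = 0) :
  c0 = 0 ∧ c1 = 0 ∧ c2 = 0 ∧ c3 = 0 ∧ c4 = 0 ∧ c5 = 0 ∧ c6 = 0 := by
  have w3 : ω^3 = 1 := by linear_combination (ω-1)*hω
  have e0 : c0 = 0 := by simpa using G 0 (Or.inl rfl)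
  have ev : ∀ z : K, z^6=1 → c2*z^2+c4*z^4+c6 = 0 := fun z hz => by
    have h := G z (Or.inr hz)
    have h' := G (-z) (Or.inr (by rw [← hz]; ring))
    apply (mul_eq_zero.1 (_ : (2:K) * _ = 0)).resolve_left h2
    linear_combination h + h' - 2*e0 - 2*c6*hz
  have od : ∀ z : K, z^6=1 → c1*z+c3*z^3+c5*z^5 = 0 := fun z hz => by
    have h := G z (Or.inr hz)
    have h' := G (-z) (Or.inr (by rw [← hz]; ring))
    apply (mul_eq_zero.1 (_ : (2:K) * _ = 0)).resolve_left h2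
    linear_combination h - h'
  have t1 : (1:K)^6 = 1 := by norm_num
  have t2 : ω^6 = 1 := by linear_combination (ω^3+1)*w3
  have t3 : (ω^2)^6 = 1 := by linear_combination (ω^9+ω^6+ω^3+1)*w3
  have p1 := ev _ t1
  have p2 : c2*ω^2+c4*ω+c6 = 0 := by linear_combination ev _ t2 - c4*ω*w3
  have p3 : c2*ω+c4*ω^2+c6 = 0 := by linear_combination ev _ t3 - (c4*ω^5+c4*ω^2+c2*ω)*w3
  have q1 := od _ t1
  have q2 : c1*ω+c3+c5*ω^2 = 0 := by linear_combination od _ t2 - (c3+c5*ω^2)*w3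
  have q3 : c1*ω^2+c3+c5*ω = 0 := by linear_combination od _ t3 - (c3*(ω^3+1)+c5*(ω^7+ω^4+ω))*w3
  refine ⟨e0, ?_, ?_, ?_, ?_, ?_, ?_⟩ <;>
    apply (mul_eq_zero.1 (_ : (3:K) * _ = 0)).resolve_left h3
  · clear G ev od; grind
  · clear G ev od; grind
  · linear_combination q1+q2+q3 - (c1+c5)*hω
  · clear G ev od; grind
  · clear G ev od; grind
  · linear_combination p1+p2+p3 - (c2+c4)*hω

lemma sextic (X a b Y ω : K) (h2 : (2:K) ≠ 0) (h3 : (3:K) ≠ 0) (hω : ω^2+ω+1=0)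
  (H : ∀ z : K, (z = 0 ∨ z^6=1) → ∀ X' a' b' : K, X' = X+z*a+z^2*b+z^3*Y → a' = a+2*z*b+3*z^2*Y → b' = b+3*z*Y →
     X' * (27*X'^2*Y-9*X'*a'*b'+2*a'^3) = 0) : 
     -27*(X^2*Y^2)+a^2*b^2+18*(X*Y)*(a*b)-4*X*b^3-4*Y*a^3 = 0 := by
  -- cubic covariant coefficients
  obtain ⟨j0, hj0⟩ : ∃ j, j = 27*X^2*Y-9*X*a*b+2*a^3 := ⟨_, rfl⟩
  obtain ⟨j1, hj1⟩ : ∃ j, j = 27*X*a*Y-18*X*b^2+3*a^2*b := ⟨_, rfl⟩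
  obtain ⟨j2, hj2⟩ : ∃ j, j = -(27*X*b*Y-18*Y*a^2+3*a*b^2) := ⟨_, rfl⟩
  obtain ⟨j3, hj3⟩ : ∃ j, j = -(27*X*Y^2-9*a*b*Y+2*b^3) := ⟨_, rfl⟩
  have G : ∀ z : K, (z = 0 ∨ z^6=1) → (X+z*a+z^2*b+z^3*Y)*(j0+z*j1+z^2*j2+z^3*j3) = 0 := by
    intro z hz
    rw [← H z hz _ _ _ rfl rfl rfl, hj0, hj1, hj2, hj3]
    ring
  obtain ⟨e0, e1, e2, e3, e4, e5, e6⟩ := interp (X*j0) (X*j1+a*j0) (X*j2+a*j1+b*j0) (X*j3+a*j2+b*j1+Y*j0)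
    (a*j3+b*j2+Y*j1) (b*j3+Y*j2) (Y*j3) ω h2 h3 hω (fun z hz => by linear_combination G z hz)
  open Polynomial in
  have key : (C X + C a * Polynomial.X + C b * Polynomial.X^2 + C Y * Polynomial.X^3) * 
    (C j0 + C j1 * Polynomial.X + C j2 * Polynomial.X^2 + C j3 * Polynomial.X^3) = 0 := by
    have : (C X + C a * Polynomial.X + C b * Polynomial.X^2 + C Y * Polynomial.X^3) * 
    (C j0 + C j1 * Polynomial.X + C j2 * Polynomial.X^2 + C j3 * Polynomial.X^3) =
      C (X*j0) + C (X*j1+a*j0) * Polynomial.X + C (X*j2+a*j1+b*j0) * Polynomial.X^2 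
      + C (X*j3+a*j2+b*j1+Y*j0) * Polynomial.X^3 + C (a*j3+b*j2+Y*j1) * Polynomial.X^4
      + C (b*j3+Y*j2) * Polynomial.X^5 + C (Y*j3) * Polynomial.X^6 := by
      simp only [C_add, C_mul]; ring
    rw [this, e0, e1, e2, e3, e4, e5, e6]; simp
  have cub : ∀ p q r s : K, (Polynomial.C p + Polynomial.C q * Polynomial.X + Polynomial.C r * Polynomial.X^2 + Polynomial.C s * Polynomial.X^3) = 0 → p = 0 ∧ q = 0 ∧ r = 0 ∧ s = 0 := by
    intro p q r s h
    have c0 := congrArg (fun f => Polynomial.coeff f 0) h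
    have c1 := congrArg (fun f => Polynomial.coeff f 1) h
    have c2 := congrArg (fun f => Polynomial.coeff f 2) h
    have c3 := congrArg (fun f => Polynomial.coeff f 3) h
    simp [Polynomial.coeff_X, Polynomial.coeff_X_pow, Polynomial.coeff_C] at c0 c1 c2 c3
    exact ⟨c0, c1, c2, c3⟩
  rcases mul_eq_zero.1 key with h | h
  · obtain ⟨rfl, rfl, rfl, rfl⟩ := cub _ _ _ _ h
    ring
  · obtain ⟨k0, k1, k2, k3⟩ := cub _ _ _ _ h
    have hd : 729*(-27*(X^2*Y^2)+a^2*b^2+18*(X*Y)*(a*b)-4*X*b^3-4*Y*a^3)^3 = 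
      -27*(j0^2*j3^2)+j1^2*j2^2+18*(j0*j3)*(j1*j2)-4*j0*j2^3-4*j3*j1^3 := by
      rw [hj0, hj1, hj2, hj3]; ring
    rw [k0,k1,k2,k3] at hd
    have h729 : (729:K) ≠ 0 := by
      have : (729:K) = 3^6 := by norm_num
      rw [this]; exact pow_ne_zero _ h3
    have := (mul_eq_zero.1 (hd.trans (by ring))).resolve_left h729
    exact pow_eq_zero_iff (by norm_num) |>.1 this
end field
section azumaya
open TensorProduct MulOpposite

/-- Casimir-type tensors. -/
def IsCas (R : Type*) {B : Type*} [CommRing R] [Ring B] [Algebra R B] (t : B ⊗[R] Bᵐᵒᵖ) : Prop :=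
  ∀ b : B, (b ⊗ₜ[R] (1 : Bᵐᵒᵖ)) * t = ((1:B) ⊗ₜ[R] op b) * t

/-- The two-sided ideal generated by the Casimir-type tensors. -/
def casIdeal (R B : Type*) [CommRing R] [Ring B] [Algebra R B] : Submodule R (B ⊗[R] Bᵐᵒᵖ) :=
  Submodule.span R {e | ∃ (c : B) (t : B ⊗[R] Bᵐᵒᵖ), IsCas R t ∧ e = (c ⊗ₜ[R] (1 : Bᵐᵒᵖ)) * t}

section
variable {R B : Type*} [CommRing R] [Ring B] [Algebra R B]

lemma mulLR_eq (t : B ⊗[R] Bᵐᵒᵖ) : mulLR R B t = AlgHom.mulLeftRight R B t := by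
  induction t using TensorProduct.induction_on with
  | zero => simp
  | tmul a b => ext m; simp [mulLR]
  | add p q hp hq => rw [map_add, map_add, hp, hq]

lemma mulLR_mul (s t : B ⊗[R] Bᵐᵒᵖ) (m : B) : mulLR R B (s * t) m = mulLR R B s (mulLR R B t m) := by
  simp [mulLR_eq]

lemma mulLR_tmul (a b m : B) : mulLR R B (a ⊗ₜ op b) m = a * m * b := by
  simp [mulLR]

lemma IsCas.mul_right {t : B ⊗[R] Bᵐᵒᵖ} (h : IsCas R t) (r : B ⊗[R] Bᵐᵒᵖ) : IsCas R (t * r) := fun b => by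
  rw [← mul_assoc, h b, mul_assoc]

lemma IsCas.smul {t : B ⊗[R] Bᵐᵒᵖ} (h : IsCas R t) (r : R) : IsCas R (r • t) := fun b => by
  rw [mul_smul_comm, mul_smul_comm, h b]

lemma IsCas.mem {t : B ⊗[R] Bᵐᵒᵖ} (h : IsCas R t) : t ∈ casIdeal R B :=
  Submodule.subset_span ⟨1, t, h, by rw [← Algebra.TensorProduct.one_def, one_mul]⟩

lemma casIdeal_left (c : B) {e : B ⊗[R] Bᵐᵒᵖ} (h : e ∈ casIdeal R B) :
    (c ⊗ₜ[R] (1 : Bᵐᵒᵖ)) * e ∈ casIdeal R B := by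
  induction h using Submodule.span_induction with
  | mem x hx =>
    obtain ⟨c', t, ht, rfl⟩ := hx
    refine Submodule.subset_span ⟨c * c', t, ht, ?_⟩
    rw [← mul_assoc, Algebra.TensorProduct.tmul_mul_tmul, one_mul]
  | zero => simp
  | add x y _ _ hx hy => rw [mul_add]; exact add_mem hx hy
  | smul r x _ hx => rw [mul_smul_comm]; exact Submodule.smul_mem _ _ hx

lemma casIdeal_right (r : B ⊗[R] Bᵐᵒᵖ) {e : B ⊗[R] Bᵐᵒᵖ} (h : e ∈ casIdeal R B) :
    e * r ∈ casIdeal R B := by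
  induction h using Submodule.span_induction with
  | mem x hx =>
    obtain ⟨c', t, ht, rfl⟩ := hx
    exact Submodule.subset_span ⟨c', t * r, ht.mul_right r, by rw [mul_assoc]⟩
  | zero => simp
  | add x y _ _ hx hy => rw [add_mul]; exact add_mem hx hy
  | smul r x _ hx => rw [smul_mul_assoc]; exact Submodule.smul_mem _ _ hx

/-- The elements of `B` balanced by the tensor `t`. -/
def balSub (t : B ⊗[R] Bᵐᵒᵖ) : Subalgebra R B where
  carrier := {b | (b ⊗ₜ[R] (1 : Bᵐᵒᵖ)) * t = ((1:B) ⊗ₜ[R] op b) * t}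
  mul_mem' := by
    intro a b ha hb
    simp only [Set.mem_ofPred_eq] at *
    have e1 : ((a * b) ⊗ₜ[R] (1 : Bᵐᵒᵖ)) = (a ⊗ₜ 1) * (b ⊗ₜ 1) := by simp
    have e2 : ((1:B) ⊗ₜ[R] op (a*b)) = (1 ⊗ₜ op b) * (1 ⊗ₜ op a) := by simp
    have e3 : (a ⊗ₜ[R] (1 : Bᵐᵒᵖ)) * (1 ⊗ₜ op b) = (1 ⊗ₜ op b) * (a ⊗ₜ 1) := by simp
    rw [e1, e2, mul_assoc, hb, ← mul_assoc, e3, mul_assoc, ha, mul_assoc]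
  add_mem' := by
    intro a b ha hb
    simp only [Set.mem_ofPred_eq] at *
    rw [TensorProduct.add_tmul, op_add, TensorProduct.tmul_add, add_mul, add_mul, ha, hb]
  algebraMap_mem' := by
    intro r
    simp only [Set.mem_ofPred_eq]
    rw [Algebra.algebraMap_eq_smul_one, op_smul, op_one, TensorProduct.smul_tmul]

lemma mem_balSub {t : B ⊗[R] Bᵐᵒᵖ} {b : B} :
  b ∈ balSub t ↔ (b ⊗ₜ[R] (1 : Bᵐᵒᵖ)) * t = ((1:B) ⊗ₜ[R] op b) * t := Iff.rfl

lemma balSub_smul {t : B ⊗[R] Bᵐᵒᵖ} {b : B} (r : R) (h : r • b ∈ balSub t) : b ∈ balSub (r • t) := by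
  rw [mem_balSub] at *
  rw [op_smul, TensorProduct.tmul_smul, ← TensorProduct.smul_tmul', smul_mul_assoc, smul_mul_assoc] at h
  rw [mul_smul_comm, mul_smul_comm, h]

lemma balSub_smul' {t : B ⊗[R] Bᵐᵒᵖ} {b : B} (r : R) (h : b ∈ balSub t) : b ∈ balSub (r • t) := 
  balSub_smul r (Subalgebra.smul_mem _ h r)

end

theorem azumaya_crit (B : Type*) [Ring B]
    (h : (1 : B ⊗[Subring.center B] Bᵐᵒᵖ) ∈ casIdeal (Subring.center B) B) :
    Module.Finite (Subring.center B) B ∧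
      Module.Projective (Subring.center B) B ∧
      FaithfulSMul (Subring.center B) B ∧
      Function.Bijective (mulLR (Subring.center B) B) := by
  obtain ⟨n, f, g, hfg⟩ := Submodule.mem_span_set'.1 h
  choose c t ht hgt using fun i => (g i).2
  have key : (∑ i, (c i ⊗ₜ[(Subring.center B)] (1 : Bᵐᵒᵖ)) * (f i • t i)) = 1 := by
    rw [← hfg]
    refine Finset.sum_congr rfl fun i _ => ?_
    rw [hgt, mul_smul_comm]
  have ht' : ∀ i, IsCas (Subring.center B) (f i • t i) := fun i => (ht i).smul _
  generalize hs : (fun i => f i • t i) = s at *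
  have hs' : ∀ i, f i • t i = s i := fun i => congrFun hs i
  simp only [hs'] at key ht'
  have cen : ∀ i b, mulLR (Subring.center B) B (s i) b ∈ (Subring.center B) := fun i b => by
    rw [Subring.mem_center_iff]
    intro b'
    have h1 := congrArg (fun e => mulLR (Subring.center B) B e b) (ht' i b')
    simp only [mulLR_mul] at h1
    rw [← op_one, mulLR_tmul, mulLR_tmul] at h1
    simpa using h1
  let T : B →ₗ[(Subring.center B)] (Fin n → (Subring.center B)) := LinearMap.pi fun i =>
    { toFun := fun b => ⟨mulLR (Subring.center B) B (s i) b, cen i b⟩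
      map_add' := fun p q => Subtype.ext (by simp)
      map_smul' := fun r q => Subtype.ext (by simp; rfl) }
  let L : (Fin n → (Subring.center B)) →ₗ[(Subring.center B)] B := Fintype.linearCombination (Subring.center B) c
  have hLT : L.comp T = LinearMap.id := by
    ext b
    have h1 := congrArg (fun e => mulLR (Subring.center B) B e b) key
    simp only [map_sum, LinearMap.sum_apply, mulLR_mul, ← op_one] at h1
    simp only [mulLR_tmul, mul_one, Algebra.TensorProduct.one_def, ← op_one, one_mul] at h1
    simp only [LinearMap.comp_apply, LinearMap.id_apply, L, Fintype.linearCombination_apply]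
    refine Eq.trans (Finset.sum_congr rfl fun i _ => ?_) h1
    change mulLR (Subring.center B) B (s i) b * c i = _
    exact ((Subring.mem_center_iff.1 (cen i b)) _).symm
  refine ⟨?_, ?_, ?_, ?_, ?_⟩
  · exact Module.Finite.of_surjective L (fun b => ⟨T b, LinearMap.congr_fun hLT b⟩)
  · exact Module.Projective.of_split T L hLT
  · exact ⟨fun {a b} hab => Subtype.ext (by simpa [Subring.smul_def] using hab (1:B))⟩
  · rw [injective_iff_map_eq_zero]
    intro v hv
    have hv' : ∀ (v : B ⊗[(Subring.center B)] Bᵐᵒᵖ) i, v * ((c i ⊗ₜ[(Subring.center B)] (1 : Bᵐᵒᵖ)) * s i) = ((mulLR (Subring.center B) B v (c i)) ⊗ₜ 1) * s i := by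
      intro v i
      induction v using TensorProduct.induction_on with
      | zero => simp
      | tmul p q => 
        have e1 : (p ⊗ₜ[(Subring.center B)] q) * (c i ⊗ₜ 1) = ((p * c i) ⊗ₜ 1) * (1 ⊗ₜ op q.unop) := by simp
        rw [← mul_assoc, e1, mul_assoc, ← ht' i, ← mul_assoc]
        simp [mulLR]
      | add p q hp hq => rw [add_mul, hp, hq, map_add, LinearMap.add_apply, TensorProduct.add_tmul, add_mul]
    rw [← mul_one v, ← key, Finset.mul_sum]
    refine Finset.sum_eq_zero fun i _ => ?_
    rw [hv', hv]; simp
  · intro F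
    refine ⟨∑ i, (F (c i) ⊗ₜ[(Subring.center B)] (1 : Bᵐᵒᵖ)) * s i, ?_⟩
    ext b
    have h1 := congrArg F (LinearMap.congr_fun hLT b)
    simp only [LinearMap.comp_apply, LinearMap.id_apply, L, Fintype.linearCombination_apply, map_sum, map_smul] at h1
    rw [← h1]
    simp only [map_sum, LinearMap.sum_apply, mulLR_mul]
    refine Finset.sum_congr rfl fun i _ => ?_
    rw [← op_one, mulLR_tmul, mul_one]
    exact ((Subring.mem_center_iff.1 (cen i b)) _)
end azumaya
section charts
open TensorProduct MulOpposite

variable {B : Type*} [Ring B]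

lemma gen_center {x y : B} (hgen : ∀ S : Subalgebra (Subring.center B) B, x ∈ S → y ∈ S → S = ⊤)
    (g : B) (hx : x * g = g * x) (hy : y * g = g * y) : ∃ G : Subring.center B, g = G • (1:B) := by
  have hS := hgen (Subalgebra.centralizer (Subring.center B) {g})
    (Subalgebra.mem_centralizer_iff _ |>.2 (by simpa using hx.symm))
    (Subalgebra.mem_centralizer_iff _ |>.2 (by simpa using hy.symm))
  refine ⟨⟨g, Subring.mem_center_iff.2 fun b => ?_⟩, by simp [Subring.smul_def]⟩
  have hb : b ∈ Subalgebra.centralizer (Subring.center B) {g} := by rw [hS]; trivial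
  have := (Subalgebra.mem_centralizer_iff _).1 hb g rfl
  exact this.symm

lemma chart (x y : B) (hgen : ∀ S : Subalgebra (Subring.center B) B, x ∈ S → y ∈ S → S = ⊤)
    (X a b ω : Subring.center B) (hω : ω^2+ω+1=0) (h3 : IsUnit (3 : Subring.center B))
    (hX : x*(x*x) = X • (1:B))
    (ha : x^2*y+x*y*x+y*x^2 = a • (1:B)) (hb : x*y^2+y*x*y+y^2*x = b • (1:B)) (u : B)
    (hu : u = (ω^2*a)•(1:B) + (ω-ω^2)•(x*(y*x-ω•(x*y)))) :
    ∃ U : Subring.center B, u*(u*u) = U•(1:B) ∧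
      (9*X^4*U^3) • (1 : B ⊗[Subring.center B] Bᵐᵒᵖ) ∈ casIdeal (Subring.center B) B := by
  obtain ⟨d, hd⟩ : ∃ d, d = y*x-ω•(x*y) := ⟨_, rfl⟩
  obtain ⟨p1, p2, p3⟩ := pbw x y a b ω hω ha hb d hd
  rw [← hd] at hu
  obtain ⟨m, hm⟩ : ∃ m, m = (ω*b)•x + d*d := ⟨_, rfl⟩
  obtain ⟨g, hg⟩ : ∃ g, g = m + ω^2•(u*y) := ⟨_, rfl⟩
  obtain ⟨i1, i2, i3, i4, i5, i6⟩ := ids x y d a b ω hω p1 p2 p3 u m g hu hm hg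
  have w3 : ω^3 = 1 := by linear_combination (ω-1)*hω
  have ux : u*x = ω^2•(x*u) := by rw [i1, smul_smul, show ω^2*ω = 1 by rw [← w3]; ring, one_smul]
  obtain ⟨G, hG⟩ := gen_center hgen g i5 i6
  obtain ⟨U, hU⟩ := gen_center hgen (u*(u*u))
    (by
      have i1' : ∀ c, u*(x*c) = ω^2•(x*(u*c)) := fun c => by rw [← mul_assoc, ux]; simp [mul_assoc]
      simp only [mul_assoc, ux, i1', mul_smul_comm, smul_smul]
      match_scalars; clear * - w3; grind)
    (by
      have i3' : ∀ c, y*(u*c) = u*(y*c) + (ω-ω^2)•(m*c) := fun c => by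
        rw [← mul_assoc, i3]; simp [add_mul, mul_assoc]
      have i4' : ∀ c, u*(m*c) = ω^2•(m*(u*c)) := fun c => by rw [← mul_assoc, i4]; simp [mul_assoc]
      simp only [mul_assoc, mul_add, i3, i3', i4, i4', mul_smul_comm, smul_add, smul_smul]
      match_scalars <;> clear * - hω <;> grind)
  refine ⟨U, hU, ?_⟩
  obtain ⟨P, hP⟩ : ∃ P : B ⊗[Subring.center B] Bᵐᵒᵖ, P = X•1 + (x ⊗ₜ 1)*((1 ⊗ₜ op x)*(1 ⊗ₜ op x))
    + (x ⊗ₜ 1)*((x ⊗ₜ 1)*(1 ⊗ₜ op x)) := ⟨_, rfl⟩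
  obtain ⟨Q, hQ⟩ : ∃ Q : B ⊗[Subring.center B] Bᵐᵒᵖ, Q = U•1 + (u ⊗ₜ 1)*((1 ⊗ₜ op u)*(1 ⊗ₜ op u))
    + (u ⊗ₜ 1)*((u ⊗ₜ 1)*(1 ⊗ₜ op u)) := ⟨_, rfl⟩
  obtain ⟨r1, r2, r3, r4⟩ := casimir ω X U hω (x ⊗ₜ[Subring.center B] (1:Bᵐᵒᵖ)) (1 ⊗ₜ op x) (u ⊗ₜ 1) (1 ⊗ₜ op u) P Q
    (by simp [hX, Algebra.TensorProduct.one_def, TensorProduct.smul_tmul'])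
    (by simp only [Algebra.TensorProduct.tmul_mul_tmul, ← op_mul, mul_assoc, hX, Algebra.TensorProduct.one_def, op_smul, op_one, TensorProduct.tmul_smul, mul_one])
    (by simp [hU, Algebra.TensorProduct.one_def, TensorProduct.smul_tmul'])
    (by simp only [Algebra.TensorProduct.tmul_mul_tmul, ← op_mul, mul_assoc, hU, Algebra.TensorProduct.one_def, op_smul, op_one, TensorProduct.tmul_smul, mul_one])
    (by simp [ux, TensorProduct.smul_tmul'])
    (by simp only [Algebra.TensorProduct.tmul_mul_tmul, ← op_mul, i1, op_smul, TensorProduct.tmul_smul])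
    (by simp) (by simp) (by simp) (by simp) hP hQ
  have xS : x ∈ balSub (P*Q) := r1
  have uS : u ∈ balSub (P*Q) := r2
  have one_S : ∀ z : Subring.center B, z•(1:B) ∈ balSub (P*Q) := fun z =>
    Subalgebra.smul_mem _ (one_mem _) z
  have dS : X • d ∈ balSub (P*Q) := by
    have h : (3*X)•d = (-(ω-ω^2))•(x*(x*(u - (ω^2*a)•(1:B)))) := by
      rw [hu, add_sub_cancel_left]
      have : x*(x*(x*d)) = X • d := by
        rw [← mul_assoc, ← mul_assoc, mul_assoc x x x, hX]; simp
      simp only [mul_smul_comm, this, smul_smul]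
      match_scalars; clear * - hω; grind
    obtain ⟨c, hc⟩ := h3.exists_left_inv
    have : X • d = c • ((3*X)•d) := by
      rw [smul_smul, ← mul_assoc, hc, one_mul]
    rw [this, h]
    exact Subalgebra.smul_mem _ (Subalgebra.smul_mem _ (mul_mem xS (mul_mem xS (sub_mem uS (one_S _)))) _) _
  have mS : X^2 • m ∈ balSub (P*Q) := by
    have : X^2 • m = (X^2*(ω*b))•x + (X•d)*(X•d) := by
      rw [hm]
      simp only [mul_smul_comm, smul_mul_assoc, smul_add, smul_smul, pow_two]
    rw [this]
    exact add_mem (Subalgebra.smul_mem _ xS _) (mul_mem dS dS)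
  have yS : (X^2*U) • y ∈ balSub (P*Q) := by
    have : (X^2*U) • y = ω • (u*(u*((X^2*G)•(1:B) - X^2•m))) := by
      have h1 : (X^2*G)•(1:B) - X^2•m = X^2 • (ω^2•(u*y)) := by
        rw [mul_smul, ← hG, hg, smul_add, add_sub_cancel_left]
      have h2 : u*(u*(u*y)) = U • y := by
        rw [← mul_assoc, ← mul_assoc, mul_assoc u u u, hU]; simp
      rw [h1]
      simp only [mul_smul_comm, h2, smul_smul]
      match_scalars; clear * - w3; grind
    rw [this]
    exact Subalgebra.smul_mem _ (mul_mem uS (mul_mem uS (sub_mem (one_S _) mS))) _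
  have cas : IsCas (Subring.center B) ((X^2*U)•(P*Q)) := by
    have := hgen (balSub ((X^2*U)•(P*Q))) (balSub_smul' _ xS) (balSub_smul _ yS)
    intro b
    have hb : b ∈ balSub ((X^2*U)•(P*Q)) := by rw [this]; trivial
    exact hb
  have c0 := cas.mem
  have uu : ∀ z : B, (z ⊗ₜ[Subring.center B] (1:Bᵐᵒᵖ)) * (z ⊗ₜ 1) = (z*z) ⊗ₜ 1 := by simp
  have c1 := add_mem (add_mem (Submodule.smul_mem _ U c0)
    (casIdeal_left u (casIdeal_right ((u ⊗ₜ 1) * (u ⊗ₜ 1)) c0)))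
    (casIdeal_left (u*u) (casIdeal_right (u ⊗ₜ 1) c0))
  have e1 : U • (X^2*U)•(P*Q) + (u ⊗ₜ[Subring.center B] (1:Bᵐᵒᵖ)) * ((X^2*U)•(P*Q) * ((u ⊗ₜ 1) * (u ⊗ₜ 1)))
     + ((u*u) ⊗ₜ[Subring.center B] (1:Bᵐᵒᵖ)) * ((X^2*U)•(P*Q) * (u ⊗ₜ 1)) = (3*X^3*U^2) • Q := by
    rw [← uu]
    have := congrArg (fun e => (X^2*U) • e) r3
    simp only [smul_add, smul_mul_assoc, mul_smul_comm] at this ⊢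
    rw [smul_comm U, this, smul_smul]
    congr 1; ring
  rw [e1] at c1
  have c2 := add_mem (add_mem (Submodule.smul_mem _ X c1)
    (casIdeal_left x (casIdeal_right ((x ⊗ₜ 1) * (x ⊗ₜ 1)) c1)))
    (casIdeal_left (x*x) (casIdeal_right (x ⊗ₜ 1) c1))
  have e2 : X • (3*X^3*U^2)•Q + (x ⊗ₜ[Subring.center B] (1:Bᵐᵒᵖ)) * ((3*X^3*U^2)•Q * ((x ⊗ₜ 1) * (x ⊗ₜ 1)))
     + ((x*x) ⊗ₜ[Subring.center B] (1:Bᵐᵒᵖ)) * ((3*X^3*U^2)•Q * (x ⊗ₜ 1)) = (9*X^4*U^3) • 1 := by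
    rw [← uu]
    have := congrArg (fun e => (3*X^3*U^2) • e) r4
    simp only [smul_add, smul_mul_assoc, mul_smul_comm] at this ⊢
    rw [smul_comm X, this, smul_smul]
    congr 1; ring
  rw [e2] at c2
  exact c2

theorem core (x y : B) (hgen : ∀ S : Subalgebra (Subring.center B) B, x ∈ S → y ∈ S → S = ⊤)
    (X a b Y ω : Subring.center B) (hω : ω^2+ω+1=0)
    (h2 : IsUnit (2 : Subring.center B)) (h3 : IsUnit (3 : Subring.center B))
    (hX : x*(x*x) = X • (1:B)) (hY : y*(y*y) = Y • (1:B))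
    (ha : x^2*y+x*y*x+y*x^2 = a • (1:B)) (hb : x*y^2+y*x*y+y^2*x = b • (1:B))
    (hΔ : IsUnit (-27*(X^2*Y^2)+a^2*b^2+18*(X*Y)*(a*b)-4*X*b^3-4*Y*a^3)) :
    (1 : B ⊗[Subring.center B] Bᵐᵒᵖ) ∈ casIdeal (Subring.center B) B := by
  let I : Ideal (Subring.center B) :=
    (casIdeal (Subring.center B) B).comap (LinearMap.toSpanSingleton (Subring.center B) _ (1 : B ⊗[Subring.center B] Bᵐᵒᵖ))
  have hI : ∀ z, z ∈ I ↔ z • (1 : B ⊗[Subring.center B] Bᵐᵒᵖ) ∈ casIdeal (Subring.center B) B := fun z => by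
    simp [I]
  suffices h : I = ⊤ by
    have h1 : (1 : Subring.center B) ∈ I := by rw [h]; trivial
    rw [hI, one_smul] at h1
    exact h1
  by_contra hne
  obtain ⟨M, hM, hIM⟩ := Ideal.exists_le_maximal I hne
  obtain ⟨K, instK, π, hπs, hπI⟩ : ∃ (K : Type _) (_ : Field K) (π : Subring.center B →+* K),
      Function.Surjective π ∧ ∀ z ∈ I, π z = 0 :=
    ⟨Subring.center B ⧸ M, Ideal.Quotient.field M, Ideal.Quotient.mk M,
      Ideal.Quotient.mk_surjective, fun z hz => Ideal.Quotient.eq_zero_iff_mem.2 (hIM hz)⟩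
  have π2 : π 2 = 2 := map_ofNat π 2
  have π3 : π 3 = 3 := map_ofNat π 3
  have π4 : π 4 = 4 := map_ofNat π 4
  have π9 : π 9 = 9 := map_ofNat π 9
  have π18 : π 18 = 18 := map_ofNat π 18
  have π27 : π 27 = 27 := map_ofNat π 27
  have k2 : (2 : K) ≠ 0 := by simpa [π2] using (h2.map π).ne_zero
  have k3 : (3 : K) ≠ 0 := by simpa [π3] using (h3.map π).ne_zero
  have kΔ := (hΔ.map π).ne_zero
  apply kΔ
  have hω' : (ω^2)^2+ω^2+1 = 0 := by linear_combination (ω^2-ω+1)*hω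
  have kω := congrArg π hω
  simp only [map_add, map_pow, map_one, map_zero] at kω
  have fin := sextic (π X) (π a) (π b) (π Y) (π ω) k2 k3 kω (by
    intro z _ X' a' b' hX' ha' hb'
    obtain ⟨z, rfl⟩ := hπs z
    obtain ⟨x', hx'⟩ : ∃ x', x' = x + z • y := ⟨_, rfl⟩
    obtain ⟨X1, hX1⟩ : ∃ X1, X1 = X+z*a+z^2*b+z^3*Y := ⟨_, rfl⟩
    obtain ⟨a1, ha1⟩ : ∃ a1, a1 = a+2*z*b+3*z^2*Y := ⟨_, rfl⟩
    obtain ⟨b1, hb1⟩ : ∃ b1, b1 = b+3*z*Y := ⟨_, rfl⟩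
    have gen' : ∀ S : Subalgebra (Subring.center B) B, x' ∈ S → y ∈ S → S = ⊤ := by
      intro S h1 h2
      refine hgen S ?_ h2
      have : x = x' - z•y := by rw [hx']; simp
      rw [this]; exact sub_mem h1 (Subalgebra.smul_mem _ h2 _)
    have eX : x'*(x'*x') = X1 • (1:B) := by
      rw [hX1, add_smul, add_smul, add_smul, mul_smul, mul_smul, mul_smul, ← hX, ← hY, ← ha, ← hb, hx']
      simp only [pow_two, mul_assoc, mul_add, add_mul, mul_smul_comm, smul_mul_assoc, smul_add, smul_smul]
      match_scalars <;> ring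
    have ea : x'^2*y+x'*y*x'+y*x'^2 = a1 • (1:B) := by
      rw [ha1, add_smul, add_smul, mul_smul _ b, mul_smul _ Y, ← hY, ← ha, ← hb, hx']
      simp only [pow_two, mul_assoc, mul_add, add_mul, mul_smul_comm, smul_mul_assoc, smul_add, smul_smul]
      match_scalars <;> ring
    have eb : x'*y^2+y*x'*y+y^2*x' = b1 • (1:B) := by
      rw [hb1, add_smul, mul_smul, ← hY, ← hb, hx']
      simp only [pow_two, mul_assoc, mul_add, add_mul, mul_smul_comm, smul_mul_assoc, smul_add, smul_smul]
      match_scalars <;> ring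
    obtain ⟨U, hU, hUI⟩ := chart x' y gen' X1 a1 b1 ω hω h3 eX ea eb _ rfl
    obtain ⟨V, hV, hVI⟩ := chart x' y gen' X1 a1 b1 (ω^2) hω' h3 eX ea eb _ rfl
    obtain ⟨p1, p2, p3⟩ := pbw x' y a1 b1 ω hω ea eb _ rfl
    have w4 : (ω^2)^2 = ω := by linear_combination (ω^2-ω)*hω
    have hUV := ids2 x' y _ a1 b1 ω hω p1 p2 p3 _ _ X1 Y eX hY rfl rfl
    have hd : y*x'-ω•(x'*y) + (ω-ω^2)•(x'*y) = y*x'-(ω^2)•(x'*y) := by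
      rw [sub_smul]; abel
    rw [w4] at hV
    rw [hd, hU, hV, ← add_smul] at hUV
    have hUV' : U + V = 27*X1^2*Y-9*X1*a1*b1+2*a1^3 := by
      apply Subtype.ext
      simpa [Subring.smul_def] using hUV
    have k9 : (9 : K) ≠ 0 := by
      have : (9 : K) = 3*3 := by norm_num
      rw [this]; exact mul_ne_zero k3 k3
    have zz : ∀ W : Subring.center B, 9*X1^4*W^3 ∈ I → π X1 * π W = 0 := by
      intro W hW
      have := hπI _ hW
      simp only [map_mul, map_pow, π2, π3, π4, π9, π18, π27] at this
      simpa [k9] using this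
    have zU := zz U ((hI _).2 hUI)
    have zV := zz V ((hI _).2 hVI)
    have eX' : X' = π X1 := by rw [hX', hX1]; simp
    have ea' : a' = π a1 := by rw [ha', ha1]; simp [π2, π3]
    have eb' : b' = π b1 := by rw [hb', hb1]; simp [π3]
    have hk := congrArg π hUV'
    simp only [map_add, map_sub, map_mul, map_pow, π2, π3, π4, π9, π18, π27] at hk
    rw [eX', ea', eb', ← hk, mul_add, zU, zV, add_zero])
  simpa [π2, π3, π4, π9, π18, π27] using fin
end charts

section final

theorem gca_ind (k : Type*) [Field k] (P : GCA k → Prop)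
    (hc : ∀ r : k, P (algebraMap k (GCA k) r)) (hx : P (gx k)) (hy : P (gy k))
    (hm : ∀ a b, P a → P b → P (a * b)) (ha : ∀ a b, P a → P b → P (a + b)) (a : GCA k) :
    P a := by
  obtain ⟨f, rfl⟩ := RingQuot.mkAlgHom_surjective k (GCRel k) a
  induction f using FreeAlgebra.induction with
  | grade0 r => rw [AlgHom.commutes]; exact hc r
  | grade1 i =>
    fin_cases i
    · exact hx
    · exact hy
  | mul f g hf hg => rw [map_mul]; exact hm _ _ hf hg
  | add f g hf hg => rw [map_add]; exact ha _ _ hf hg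

theorem gca_comm (k : Type*) [Field k] (z : GCA k) (hx : Commute z (gx k))
    (hy : Commute z (gy k)) (a : GCA k) : Commute z a :=
  gca_ind k (fun a => Commute z a) (fun r => Algebra.commutes' r z |>.symm) hx hy
    (fun _ _ h1 h2 => h1.mul_right h2) (fun _ _ h1 h2 => h1.add_right h2) a

theorem gca_rel1 (k : Type*) [Field k] : gx k ^ 3 * gy k = gy k * gx k ^ 3 := by
  have := RingQuot.mkAlgHom_rel k (GCRel.rel1 (k := k))
  simp only [map_mul, map_pow, map_add] at this
  exact this

theorem gca_rel2 (k : Type*) [Field k] : gx k * gy k ^ 3 = gy k ^ 3 * gx k := by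
  have := RingQuot.mkAlgHom_rel k (GCRel.rel2 (k := k))
  simp only [map_mul, map_pow, map_add] at this
  exact this

theorem gca_rel3 (k : Type*) [Field k] :
    gx k ^ 2 * gy k ^ 2 + (gx k * gy k) ^ 2 = gy k ^ 2 * gx k ^ 2 + (gy k * gx k) ^ 2 := by
  have := RingQuot.mkAlgHom_rel k (GCRel.rel3 (k := k))
  simp only [map_mul, map_pow, map_add] at this
  exact this

theorem gca_x3 (k : Type*) [Field k] (a : GCA k) : Commute (gx k ^ 3) a :=
  gca_comm k _ ((Commute.refl _).pow_left 3) (gca_rel1 k) a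

theorem gca_y3 (k : Type*) [Field k] (a : GCA k) : Commute (gy k ^ 3) a :=
  gca_comm k _ (gca_rel2 k).symm ((Commute.refl _).pow_left 3) a

theorem gca_alpha (k : Type*) [Field k] (a : GCA k) : Commute (gα k) a := by
  refine gca_comm k _ ?_ ?_ a
  · have h := gca_rel1 k
    unfold gα
    rw [commute_iff_eq, ← sub_eq_zero]
    rw [← sub_eq_zero] at h
    rw [← neg_eq_zero, ← h]
    noncomm_ring
  · have h := gca_rel3 k
    unfold gα
    rw [commute_iff_eq, ← sub_eq_zero]
    rw [← sub_eq_zero] at h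
    rw [← h]
    noncomm_ring

theorem gca_beta (k : Type*) [Field k] (a : GCA k) : Commute (gβ k) a := by
  refine gca_comm k _ ?_ ?_ a
  · have h := gca_rel3 k
    unfold gβ
    rw [commute_iff_eq, ← sub_eq_zero]
    rw [← sub_eq_zero] at h
    rw [← neg_eq_zero, ← h]
    noncomm_ring
  · have h := gca_rel2 k
    unfold gβ
    rw [commute_iff_eq, ← sub_eq_zero]
    rw [← sub_eq_zero] at h
    rw [← h]
    noncomm_ring

theorem gca_delta (k : Type*) [Field k] :
    gΔ k = -27 * ((gx k ^ 3) ^ 2 * (gy k ^ 3) ^ 2) + gα k ^ 2 * gβ k ^ 2 +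
      18 * (gx k ^ 3 * gy k ^ 3) * (gα k * gβ k) -
      4 * gx k ^ 3 * gβ k ^ 3 - 4 * gy k ^ 3 * gα k ^ 3 := by
  rw [← pow_mul, ← pow_mul]; rfl

theorem gca_delta_comm (k : Type*) [Field k] (c : GCA k) : Commute (gΔ k) c := by
  have m : ∀ z : GCA k, (∀ c, Commute z c) → z ∈ Subring.center (GCA k) := fun z hz =>
    Subring.mem_center_iff.2 fun g => (hz g).symm
  have X := m _ (gca_x3 k)
  have Y := m _ (gca_y3 k)
  have a := m _ (gca_alpha k)
  have b := m _ (gca_beta k)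
  obtain ⟨X, hX⟩ : ∃ X' : Subring.center (GCA k), (X' : GCA k) = gx k ^ 3 := ⟨⟨_, X⟩, rfl⟩
  obtain ⟨Y, hY⟩ : ∃ X' : Subring.center (GCA k), (X' : GCA k) = gy k ^ 3 := ⟨⟨_, Y⟩, rfl⟩
  obtain ⟨a, ha⟩ : ∃ X' : Subring.center (GCA k), (X' : GCA k) = gα k := ⟨⟨_, a⟩, rfl⟩
  obtain ⟨b, hb⟩ : ∃ X' : Subring.center (GCA k), (X' : GCA k) = gβ k := ⟨⟨_, b⟩, rfl⟩
  have : gΔ k = ((-27*(X^2*Y^2)+a^2*b^2+18*(X*Y)*(a*b)-4*X*b^3-4*Y*a^3 :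
      Subring.center (GCA k)) : GCA k) := by
    rw [gca_delta, ← hX, ← hY, ← ha, ← hb]
    push_cast
    rfl
  rw [this]
  exact (Subring.mem_center_iff.1 (Subtype.prop _) c).symm

end final

theorem stmt10 (k : Type*) [Field k] (h2 : (2 : k) ≠ 0) (h3 : (3 : k) ≠ 0)
    (ω : k) (hω : IsPrimitiveRoot ω 3)
    (B : Type*) [Ring B] (φ : GCA k →+* B)
    -- `(B, φ)` is the localization of `A` at the central multiplicative set of powers of `Δ_A`:
    (hunit : IsUnit (φ (gΔ k)))
    (hfrac : ∀ b : B, ∃ (a : GCA k) (n : ℕ), b * φ (gΔ k) ^ n = φ a)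
    (hker : ∀ a : GCA k, φ a = 0 ↔ ∃ n : ℕ, gΔ k ^ n * a = 0) :
    -- `B = A_Δ` is an Azumaya algebra over its center:
    Module.Finite (Subring.center B) B ∧
      Module.Projective (Subring.center B) B ∧
      FaithfulSMul (Subring.center B) B ∧
      Function.Bijective (mulLR (Subring.center B) B) := by
  classical
  -- inverse of `φ Δ`
  obtain ⟨d, hd⟩ := hunit
  have hdinv : ∀ n : ℕ, φ (gΔ k) ^ n * ((d⁻¹ : Bˣ) : B) ^ n = 1 := by
    intro n
    rw [← hd, ← Units.val_pow_eq_pow_val, ← Units.val_pow_eq_pow_val, ← Units.val_mul, inv_pow,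
      mul_inv_cancel, Units.val_one]
  have hform : ∀ c : B, ∃ (a : GCA k) (n : ℕ), c = φ a * ((d⁻¹ : Bˣ) : B) ^ n := by
    intro c
    obtain ⟨a, n, h⟩ := hfrac c
    exact ⟨a, n, by rw [← h, mul_assoc, hdinv, mul_one]⟩
  -- images of central elements are central
  have hcen : ∀ z : GCA k, (∀ a, Commute z a) → φ z ∈ Subring.center B := by
    intro z hz
    rw [Subring.mem_center_iff]
    intro c
    obtain ⟨a, n, rfl⟩ := hform c
    have h1 : Commute (φ z) (φ a) := (hz a).map φ
    have h2 : Commute (φ z) ((d⁻¹ : Bˣ) : B) := by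
      apply Commute.units_inv_right
      rw [hd]; exact (hz _).map φ
    exact (h1.mul_right (h2.pow_right n)).symm
  have hdc : ((d⁻¹ : Bˣ) : B) ∈ Subring.center B := by
    rw [Subring.mem_center_iff]
    intro c
    have h := Subring.mem_center_iff.1 (hcen _ (gca_delta_comm k)) c
    rw [← hd] at h
    exact (Commute.units_inv_right (show Commute c (d : B) from h))
  have hsc : ∀ r : k, φ (algebraMap k (GCA k) r) ∈ Subring.center B := fun r =>
    hcen _ fun a => Algebra.commutes r a
  let ψ : k →+* Subring.center B :=
    (φ.comp (algebraMap k (GCA k))).codRestrict (Subring.center B) hsc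
  obtain ⟨X, hX⟩ : ∃ X : Subring.center B, (X : B) = φ (gx k ^ 3) := ⟨⟨_, hcen _ (gca_x3 k)⟩, rfl⟩
  obtain ⟨Y, hY⟩ : ∃ X : Subring.center B, (X : B) = φ (gy k ^ 3) := ⟨⟨_, hcen _ (gca_y3 k)⟩, rfl⟩
  obtain ⟨a, ha⟩ : ∃ X : Subring.center B, (X : B) = φ (gα k) := ⟨⟨_, hcen _ (gca_alpha k)⟩, rfl⟩
  obtain ⟨b, hb⟩ : ∃ X : Subring.center B, (X : B) = φ (gβ k) := ⟨⟨_, hcen _ (gca_beta k)⟩, rfl⟩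
  have hωk : ω ^ 2 + ω + 1 = 0 := by
    have h1 : ω ^ 3 = 1 := hω.pow_eq_one
    have h2 : ω - 1 ≠ 0 := sub_ne_zero.2 (hω.ne_one (by norm_num))
    apply mul_left_cancel₀ h2
    linear_combination h1
  have hΔ : ((-27*(X^2*Y^2)+a^2*b^2+18*(X*Y)*(a*b)-4*X*b^3-4*Y*a^3 : Subring.center B) : B)
      = φ (gΔ k) := by
    rw [gca_delta]
    simp only [map_add, map_sub, map_mul, map_pow, map_neg, map_ofNat]
    simp only [map_pow] at hX hY
    rw [← hX, ← hY, ← ha, ← hb]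
    push_cast
    rfl
  refine azumaya_crit B (core (φ (gx k)) (φ (gy k)) ?_ X a b Y (ψ ω) ?_ ?_ ?_ ?_ ?_ ?_ ?_ ?_)
  · intro S hxS hyS
    rw [eq_top_iff]
    intro c _
    obtain ⟨a, n, rfl⟩ := hform c
    have hz : ∀ z ∈ Subring.center B, z ∈ S := fun z hz => S.algebraMap_mem ⟨z, hz⟩
    refine mul_mem ?_ (pow_mem (hz _ hdc) n)
    refine gca_ind k (fun a => φ a ∈ S) (fun r => hz _ (hsc r)) hxS hyS ?_ ?_ a
    · intro a b h1 h2; rw [map_mul]; exact mul_mem h1 h2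
    · intro a b h1 h2; rw [map_add]; exact add_mem h1 h2
  · rw [← map_pow, ← map_add, ← map_one ψ, ← map_add, hωk, map_zero]
  · have := (IsUnit.mk0 (2 : k) h2).map ψ
    rwa [map_ofNat] at this
  · have := (IsUnit.mk0 (3 : k) h3).map ψ
    rwa [map_ofNat] at this
  · rw [Subring.smul_def, smul_eq_mul, mul_one, hX, map_pow]; noncomm_ring
  · rw [Subring.smul_def, smul_eq_mul, mul_one, hY, map_pow]; noncomm_ring
  · rw [Subring.smul_def, smul_eq_mul, mul_one, ha]; simp only [gα, map_add, map_mul, map_pow]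
  · rw [Subring.smul_def, smul_eq_mul, mul_one, hb]; simp only [gβ, map_add, map_mul, map_pow]
  · refine IsUnit.of_mul_eq_one (⟨_, hdc⟩ : Subring.center B) ?_
    apply Subtype.ext
    rw [Subring.coe_mul, hΔ]
    simpa using hdinv 1
end

section
/- Let k be any field and let f, g, h be polynomials in k[a,d] satisfying h³ = a·f³ + d·g³. Then f = g = h = 0. -/
open MvPolynomial

theorem stmt11 (k : Type*) [Field k] (f g h : MvPolynomial (Fin 2) k)
    (H : h ^ 3 = X 0 * f ^ 3 + X 1 * g ^ 3) :
    f = 0 ∧ g = 0 ∧ h = 0 := by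
  let m : MonomialOrder (Fin 2) := MonomialOrder.lex
  have dh : m.degree (h ^ 3) = 3 • m.degree h := m.degree_pow h 3
  have dF : f ≠ 0 → m.degree (X 0 * f ^ 3) = Finsupp.single 0 1 + 3 • m.degree f := by
    intro hf
    rw [m.degree_mul (X_ne_zero _) (pow_ne_zero _ hf), m.degree_pow, m.degree_X]
  have dG : g ≠ 0 → m.degree (X 1 * g ^ 3) = Finsupp.single 1 1 + 3 • m.degree g := by
    intro hg
    rw [m.degree_mul (X_ne_zero _) (pow_ne_zero _ hg), m.degree_pow, m.degree_X]
  have key1 : f ≠ 0 → m.degree (h ^ 3) ≠ m.degree (X 0 * f ^ 3) := by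
    intro hf e
    rw [dh, dF hf] at e
    have := DFunLike.congr_fun e 0
    simp at this
    omega
  have key2 : g ≠ 0 → m.degree (h ^ 3) ≠ m.degree (X 1 * g ^ 3) := by
    intro hg e
    rw [dh, dG hg] at e
    have := DFunLike.congr_fun e 1
    simp at this
    omega
  by_cases hf : f = 0
  · by_cases hg : g = 0
    · subst hf hg
      simpa using H
    · exact absurd (by rw [H, hf]; simp) (key2 hg)
  · by_cases hg : g = 0
    · exact absurd (by rw [H, hg]; simp) (key1 hf)
    · exfalso
      have hne : m.degree (X 0 * f ^ 3) ≠ m.degree (X 1 * g ^ 3) := by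
        intro e
        rw [dF hf, dG hg] at e
        have := DFunLike.congr_fun e 0
        simp at this
        omega
      rcases lt_trichotomy (m.toSyn (m.degree (X 0 * f ^ 3)))
        (m.toSyn (m.degree (X 1 * g ^ 3))) with l | l | l
      · exact key2 hg (by rw [H, add_comm]; exact m.degree_add_of_lt l)
      · exact hne (m.toSyn.injective l)
      · exact key1 hf (by rw [H]; exact m.degree_add_of_lt l)
end

section
/- Let k be any field and let f, g, h be polynomials in k[a,b,d] satisfying h³ = a·f³ + b·f²·g + d·g³. Then f = g = h = 0. -/
open MvPolynomial

lemma aux_deg {k : Type*} [Field k] (f g h : MvPolynomial (Fin 3) k)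
    (H : h ^ 3 = X 0 * f ^ 3 + X 2 * g ^ 3) :
    f = 0 ∧ g = 0 ∧ h = 0 := by
  let m : MonomialOrder (Fin 3) := MonomialOrder.lex
  have dX : ∀ (i : Fin 3) (p : MvPolynomial (Fin 3) k), p ≠ 0 →
      m.degree (X i * p ^ 3) = Finsupp.single i 1 + 3 • m.degree p := by
    intro i p hp
    rw [m.degree_mul (X_ne_zero i) (pow_ne_zero 3 hp), m.degree_pow, m.degree_X]
  have dh : m.degree (h ^ 3) = 3 • m.degree h := m.degree_pow h 3
  by_cases hf : f = 0
  · by_cases hg : g = 0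
    · subst hf hg
      simpa using H
    · exfalso
      have := dX 2 g hg
      subst hf
      simp only [ne_eq, OfNat.ofNat_ne_zero, not_false_eq_true, zero_pow, mul_zero, zero_add] at H
      rw [← H, dh] at this
      have := DFunLike.congr_fun this 2
      simp at this
      omega
  · exfalso
    have h0 := dX 0 f hf
    by_cases hg : g = 0
    · subst hg
      simp only [ne_eq, OfNat.ofNat_ne_zero, not_false_eq_true, zero_pow, mul_zero, add_zero] at H
      rw [← H, dh] at h0
      have := DFunLike.congr_fun h0 0
      simp at this
      omega
    · have h2 := dX 2 g hg
      have hne : m.degree (X 0 * f ^ 3) ≠ m.degree (X 2 * g ^ 3) := by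
        rw [h0, h2]
        intro e
        have := DFunLike.congr_fun e 0
        simp at this
        omega
      rcases lt_or_gt_of_ne (fun e => hne (m.toSyn.injective e)) with hl | hl
      · have := m.degree_add_of_lt hl
        rw [add_comm, ← H, dh, h2] at this
        have := DFunLike.congr_fun this 2
        simp at this
        omega
      · have := m.degree_add_of_lt hl
        rw [← H, dh, h0] at this
        have := DFunLike.congr_fun this 0
        simp at this
        omega

lemma aux_dvd {k : Type*} [Field k] (f g h : MvPolynomial (Fin 3) k)
    (H : h ^ 3 = X 0 * f ^ 3 + X 1 * f ^ 2 * g + X 2 * g ^ 3) :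
    X 1 ∣ f ∧ X 1 ∣ g ∧ X 1 ∣ h := by
  let φ : MvPolynomial (Fin 3) k →ₐ[k] MvPolynomial (Fin 3) k :=
    aeval (fun i => if i = 1 then 0 else X i)
  let I : Ideal (MvPolynomial (Fin 3) k) := Ideal.span {X 1}
  have hc : (Ideal.Quotient.mkₐ k I).comp φ = Ideal.Quotient.mkₐ k I := by
    apply MvPolynomial.algHom_ext
    intro i
    by_cases hi : i = 1
    · subst hi
      have : Ideal.Quotient.mk I (X 1) = 0 :=
        Ideal.Quotient.eq_zero_iff_mem.2 (Ideal.mem_span_singleton_self _)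
      simp [φ, this]
    · simp [φ, hi]
  have key : ∀ p, φ p = 0 → X 1 ∣ p := by
    intro p hp
    have := DFunLike.congr_fun hc p
    simp only [AlgHom.comp_apply, hp, map_zero] at this
    exact Ideal.mem_span_singleton.1 (Ideal.Quotient.eq_zero_iff_mem.1 this.symm)
  have H' := congrArg φ H
  have e0 : φ (X 0) = X 0 := by simp [φ]
  have e1 : φ (X 1) = 0 := by simp [φ]
  have e2 : φ (X 2) = X 2 := by simp [φ]
  simp only [map_add, map_mul, map_pow, e0, e1, e2, zero_mul, add_zero] at H'
  obtain ⟨a, b, c⟩ := aux_deg _ _ _ H'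
  exact ⟨key _ a, key _ b, key _ c⟩

lemma aux_pow {k : Type*} [Field k] (n : ℕ) : ∀ (f g h : MvPolynomial (Fin 3) k)
    (_ : h ^ 3 = X 0 * f ^ 3 + X 1 * f ^ 2 * g + X 2 * g ^ 3),
    X 1 ^ n ∣ f ∧ X 1 ^ n ∣ g ∧ X 1 ^ n ∣ h := by
  induction n with
  | zero => intros; simp
  | succ n ih =>
    intro f g h H
    obtain ⟨⟨f, rfl⟩, ⟨g, rfl⟩, ⟨h, rfl⟩⟩ := aux_dvd f g h H
    have hX : (X 1 : MvPolynomial (Fin 3) k) ^ 3 ≠ 0 := pow_ne_zero _ (X_ne_zero _)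
    obtain ⟨a, b, c⟩ := ih f g h (mul_left_cancel₀ hX (by linear_combination H))
    rw [pow_succ']
    exact ⟨mul_dvd_mul_left _ a, mul_dvd_mul_left _ b, mul_dvd_mul_left _ c⟩

theorem stmt12 (k : Type*) [Field k] (f g h : MvPolynomial (Fin 3) k)
    (H : h ^ 3 = X 0 * f ^ 3 + X 1 * f ^ 2 * g + X 2 * g ^ 3) :
    f = 0 ∧ g = 0 ∧ h = 0 := by
  have key : ∀ p : MvPolynomial (Fin 3) k, (∀ n, X 1 ^ n ∣ p) → p = 0 := by
    intro p hp
    by_contra hne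
    have hu : ¬ IsUnit (X 1 : MvPolynomial (Fin 3) k) := (MvPolynomial.X_prime (i := 1)).not_unit
    obtain ⟨n, hn⟩ := FiniteMultiplicity.of_not_isUnit hu hne
    exact hn (hp _)
  exact ⟨key _ fun n => (aux_pow n f g h H).1, key _ fun n => (aux_pow n f g h H).2.1,
    key _ fun n => (aux_pow n f g h H).2.2⟩
end

section
/- Let k be any field and let f, g, h be polynomials in k[a,b,c,d] satisfying h³ = a·f³ + b·f²·g + c·f·g² + d·g³. Then f = g = h = 0. Equivalently, the cubic curve w³ = a·u³ + b·u²v + c·uv² + d·v³ has no rational point over the rational function field k(a,b,c,d). -/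
open MvPolynomial

theorem aux_lt {R : Type*} [CommRing R] [IsDomain R] {P Q H : Polynomial R} {n : ℕ}
    (h : H ^ 3 = P + Q) (hP : P.natDegree = n) (hQ : Q.natDegree < n) : n % 3 = 0 := by
  have h1 := congrArg Polynomial.natDegree h
  rw [Polynomial.natDegree_add_eq_left_of_natDegree_lt (by omega), Polynomial.natDegree_pow] at h1
  omega

theorem aux_poly {R : Type*} [CommRing R] [IsDomain R] (a b c d : R) (ha : a ≠ 0) (hd : d ≠ 0)
    (F G H : Polynomial R)
    (h : H ^ 3 = (Polynomial.C a * Polynomial.X) * F ^ 3 + Polynomial.C b * F ^ 2 * G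
      + Polynomial.C c * F * G ^ 2 + (Polynomial.C d * Polynomial.X ^ 2) * G ^ 3) :
    F = 0 ∧ G = 0 := by
  have dA : ∀ F : Polynomial R, F ≠ 0 →
      ((Polynomial.C a * Polynomial.X) * F ^ 3).natDegree = 1 + 3 * F.natDegree := by
    intro F hF
    rw [Polynomial.natDegree_mul (by simp [ha]) (by simp [hF]), Polynomial.natDegree_pow,
      Polynomial.natDegree_C_mul_X _ ha]
  have dD : ∀ F : Polynomial R, F ≠ 0 →
      ((Polynomial.C d * Polynomial.X ^ 2) * F ^ 3).natDegree = 2 + 3 * F.natDegree := by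
    intro F hF
    rw [Polynomial.natDegree_mul (by simp [hd]) (by simp [hF]), Polynomial.natDegree_pow,
      Polynomial.natDegree_C_mul_X_pow _ _ hd]
  have dB : (Polynomial.C b * F ^ 2 * G).natDegree ≤ 2 * F.natDegree + G.natDegree := by
    refine Polynomial.natDegree_mul_le.trans ?_
    have := Polynomial.natDegree_C_mul_le b (F ^ 2)
    rw [Polynomial.natDegree_pow] at this
    omega
  have dC : (Polynomial.C c * F * G ^ 2).natDegree ≤ F.natDegree + 2 * G.natDegree := by
    refine Polynomial.natDegree_mul_le.trans ?_
    have := Polynomial.natDegree_C_mul_le c F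
    rw [Polynomial.natDegree_pow]
    omega
  by_cases hF : F = 0
  · refine ⟨hF, ?_⟩
    by_contra hG
    subst hF
    have := aux_lt (P := (Polynomial.C d * Polynomial.X ^ 2) * G ^ 3) (Q := 0) (H := H)
      (by rw [h]; ring) (dD G hG) (by simp)
    omega
  exfalso
  have hA := dA F hF
  by_cases hG : G = 0
  · subst hG
    have := aux_lt (P := (Polynomial.C a * Polynomial.X) * F ^ 3) (Q := 0) (H := H)
      (by rw [h]; ring) hA (by simp)
    omega
  have hD := dD G hG
  generalize (Polynomial.C a * Polynomial.X) * F ^ 3 = A at *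
  generalize (Polynomial.C d * Polynomial.X ^ 2) * G ^ 3 = D at *
  generalize Polynomial.C b * F ^ 2 * G = B at *
  generalize Polynomial.C c * F * G ^ 2 = C at *
  have hBC := Polynomial.natDegree_add_le B C
  have hBCD := Polynomial.natDegree_add_le (B + C) D
  have hBCA := Polynomial.natDegree_add_le (B + C) A
  rcases lt_or_ge G.natDegree F.natDegree with hl | hl
  · have := aux_lt (P := A) (Q := B + C + D) (H := H) (by rw [h]; ring) hA (by omega)
    omega
  · have := aux_lt (P := D) (Q := B + C + A) (H := H) (by rw [h]; ring) hD (by omega)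
    omega

theorem aux_main (k : Type*) [Field k] (f g h : MvPolynomial (Fin 4) k)
    (e : h ^ 3 = X 0 * f ^ 3 + X 1 * f ^ 2 * g + X 2 * f * g ^ 2 + X 3 * g ^ 3) :
    f = 0 ∧ g = 0 ∧ h = 0 := by
  let φ : MvPolynomial (Fin 4) k →ₐ[k] Polynomial (MvPolynomial (Fin 4) k) :=
    aeval ![Polynomial.C (X 0) * Polynomial.X, Polynomial.C (X 1), Polynomial.C (X 2),
      Polynomial.C (X 3) * Polynomial.X ^ 2]
  have hinv : ∀ p, Polynomial.eval 1 (φ p) = p := by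
    intro p
    have : ((Polynomial.evalRingHom (1 : MvPolynomial (Fin 4) k)).comp φ.toRingHom) =
        RingHom.id _ := by
      apply MvPolynomial.ringHom_ext
      · intro r
        simp [φ, Polynomial.algebraMap_apply, MvPolynomial.algebraMap_eq]
      · intro i
        fin_cases i <;> simp [φ]
    exact congrArg (fun q => q p) this
  have e' := congrArg φ e
  simp only [map_add, map_mul, map_pow] at e'
  have h0 : φ (X 0) = Polynomial.C (X 0) * Polynomial.X := by simp [φ]
  have h1 : φ (X 1) = Polynomial.C (X 1) := by simp [φ]
  have h2 : φ (X 2) = Polynomial.C (X 2) := by simp [φ]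
  have h3 : φ (X 3) = Polynomial.C (X 3) * Polynomial.X ^ 2 := by simp [φ]
  rw [h0, h1, h2, h3] at e'
  obtain ⟨hf, hg⟩ := aux_poly _ _ _ _ (X_ne_zero _) (X_ne_zero _) _ _ _ e'
  have hf' : f = 0 := by rw [← hinv f, hf]; simp
  have hg' : g = 0 := by rw [← hinv g, hg]; simp
  refine ⟨hf', hg', ?_⟩
  subst hf' hg'
  simpa using e

theorem stmt13 (k : Type*) [Field k] :
    (∀ f g h : MvPolynomial (Fin 4) k,
        h ^ 3 = X 0 * f ^ 3 + X 1 * f ^ 2 * g + X 2 * f * g ^ 2 + X 3 * g ^ 3 →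
          f = 0 ∧ g = 0 ∧ h = 0) ∧
      ∀ u v w : FractionRing (MvPolynomial (Fin 4) k),
        w ^ 3 =
            algebraMap (MvPolynomial (Fin 4) k) _ (X 0) * u ^ 3 +
              algebraMap (MvPolynomial (Fin 4) k) _ (X 1) * u ^ 2 * v +
              algebraMap (MvPolynomial (Fin 4) k) _ (X 2) * u * v ^ 2 +
              algebraMap (MvPolynomial (Fin 4) k) _ (X 3) * v ^ 3 →
          u = 0 ∧ v = 0 ∧ w = 0 := by
  refine ⟨aux_main k, ?_⟩
  intro u v w e
  have hinj := IsFractionRing.injective (MvPolynomial (Fin 4) k)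
    (FractionRing (MvPolynomial (Fin 4) k))
  obtain ⟨p, s, hs, rfl⟩ := IsFractionRing.div_surjective (A := MvPolynomial (Fin 4) k) u
  obtain ⟨q, t, ht, rfl⟩ := IsFractionRing.div_surjective (A := MvPolynomial (Fin 4) k) v
  obtain ⟨r, z, hz, rfl⟩ := IsFractionRing.div_surjective (A := MvPolynomial (Fin 4) k) w
  have hs0 := nonZeroDivisors.ne_zero hs
  have ht0 := nonZeroDivisors.ne_zero ht
  have hz0 := nonZeroDivisors.ne_zero hz
  have hs' := (map_ne_zero_iff _ hinj).2 hs0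
  have ht' := (map_ne_zero_iff _ hinj).2 ht0
  have hz' := (map_ne_zero_iff _ hinj).2 hz0
  have key := aux_main k (p * t * z) (q * s * z) (r * s * t) (by
    apply hinj
    simp only [map_add, map_mul, map_pow]
    generalize algebraMap (MvPolynomial (Fin 4) k)
      (FractionRing (MvPolynomial (Fin 4) k)) = ψ at *
    have a1 : ψ p * ψ t * ψ z = (ψ p / ψ s) * (ψ s * ψ t * ψ z) := by field_simp
    have a2 : ψ q * ψ s * ψ z = (ψ q / ψ t) * (ψ s * ψ t * ψ z) := by field_simp
    have a3 : ψ r * ψ s * ψ t = (ψ r / ψ z) * (ψ s * ψ t * ψ z) := by field_simp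
    rw [a1, a2, a3, mul_pow, e]
    ring)
  simp only [mul_eq_zero, hs0, ht0, hz0, or_false] at key
  obtain ⟨rfl, rfl, rfl⟩ := key
  simp
end

section
/- In the binary cubic generic Clifford algebra A, the element ε = xyx + ω·x²y + ω²·yx² satisfies εx = ω·xε and εy = ω·yε + (1−ω)·γ, and ε³ is central in A. -/
/-- ε = xyx + ω·x²y + ω²·yx². -/
noncomputable def gε (k : Type*) [Field k] (ω : k) : GCA k :=
  gx k * gy k * gx k + algebraMap k (GCA k) ω * (gx k ^ 2 * gy k) +
    algebraMap k (GCA k) (ω ^ 2) * (gy k * gx k ^ 2)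

/-- An element commuting with both generators is central. -/
theorem gca_center (k : Type*) [Field k] (c : GCA k) (hx : c * gx k = gx k * c)
    (hy : c * gy k = gy k * c) : c ∈ Set.center (GCA k) := by
  rw [Semigroup.mem_center_iff]
  intro g
  obtain ⟨a, rfl⟩ := RingQuot.mkAlgHom_surjective k (GCRel k) g
  induction a using FreeAlgebra.induction with
  | grade0 r =>
    rw [AlgHom.commutes]
    exact Algebra.commutes r c
  | grade1 i =>
    fin_cases i
    · exact hx.symm
    · exact hy.symm
  | mul a b ha hb => rw [map_mul, mul_assoc, hb, ← mul_assoc, ha, mul_assoc]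
  | add a b ha hb => rw [map_add, add_mul, ha, hb, mul_add]

/-- The first two identities and the commutation of the cube, in any ring. -/
theorem gca_aux {A : Type*} [Ring A] (x y w e g : A)
    (r1 : x ^ 3 * y = y * x ^ 3) (r2 : x * y ^ 3 = y ^ 3 * x)
    (r3 : x ^ 2 * y ^ 2 + (x * y) ^ 2 = y ^ 2 * x ^ 2 + (y * x) ^ 2)
    (hw : ∀ a, a * w = w * a) (hw3 : w * w * w = 1)
    (he : e = x * y * x + w * (x ^ 2 * y) + w * w * (y * x ^ 2))
    (hg : g = (x * y) ^ 2 - y ^ 2 * x ^ 2) :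
    e * x = w * (x * e) ∧ e * y = w * (y * e) + (1 - w) * g ∧
      e ^ 3 * x = x * e ^ 3 ∧ e ^ 3 * y = y * e ^ 3 := by
  have hwl : ∀ a b, a * (w * b) = w * (a * b) := fun a b => by
    rw [← mul_assoc, hw, mul_assoc]
  have hw3' : ∀ a, w * (w * (w * a)) = a := fun a => by
    rw [← mul_assoc, ← mul_assoc, hw3, one_mul]
  have hg' : g = (y * x) ^ 2 - x ^ 2 * y ^ 2 := by
    rw [hg, sub_eq_sub_iff_add_eq_add, add_comm, r3, add_comm]
  have gx : g * x = x * g := by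
    have h2 : g * x = x * y * x * y * x - y * (y * x ^ 3) := by
      rw [hg]; noncomm_ring
    have h3 : x * g = x * y * x * y * x - (x ^ 3 * y) * y := by
      rw [hg']; noncomm_ring
    rw [h2, h3, r1, mul_assoc y (x ^ 3) y, r1]
  have gy : g * y = y * g := by
    have h2 : g * y = y * x * y * x * y - x * (x * y ^ 3) := by
      rw [hg']; noncomm_ring
    have h3 : y * g = y * x * y * x * y - (y ^ 3 * x) * x := by
      rw [hg]; noncomm_ring
    rw [h2, h3, ← r2, mul_assoc x (y ^ 3) x, r2]
  have ge : g * e = e * g := by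
    have cx : Commute g x := gx
    have cy : Commute g y := gy
    have cw : Commute g w := hw g
    rw [he]
    exact (((cx.mul_right cy).mul_right cx).add_right
      (cw.mul_right ((cx.pow_right 2).mul_right cy))).add_right
      ((cw.mul_right cw).mul_right (cy.mul_right (cx.pow_right 2)))
  have ex : e * x = w * (x * e) := by
    have h1 : e * x = x * y * x ^ 2 + w * (x ^ 2 * y * x) + w * (w * (y * x ^ 3)) := by
      rw [he]; noncomm_ring
    have h2 : w * (x * e) = w * (x ^ 2 * y * x) + w * (w * (x ^ 3 * y))
        + w * (w * (w * (x * y * x ^ 2))) := by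
      rw [he]; simp only [mul_add, mul_assoc, hwl]; noncomm_ring
    rw [h1, h2, hw3', r1]; abel
  have ey : e * y = w * (y * e) + (1 - w) * g := by
    have h1 : e * y = (x * y) ^ 2 + w * (x ^ 2 * y ^ 2) + w * (w * (y * x ^ 2 * y)) := by
      rw [he]; noncomm_ring
    have h2 : w * (y * e) = w * ((y * x) ^ 2) + w * (w * (y * x ^ 2 * y))
        + w * (w * (w * (y ^ 2 * x ^ 2))) := by
      rw [he]; simp only [mul_add, mul_assoc, hwl]; noncomm_ring
    have h3 : (1 - w) * g = ((x * y) ^ 2 - y ^ 2 * x ^ 2)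
        - w * ((y * x) ^ 2 - x ^ 2 * y ^ 2) := by
      rw [← hg, ← hg', sub_mul, one_mul]
    rw [h1, h2, h3, hw3', mul_sub]; abel
  refine ⟨ex, ey, ?_, ?_⟩
  · have : e ^ 3 * x = e * (e * (e * x)) := by noncomm_ring
    rw [this, ex, hwl, ← mul_assoc e x, ex, hwl, mul_assoc w, hwl, hwl,
      mul_assoc x, ← mul_assoc e x, ex, mul_assoc w, hw3']
    noncomm_ring
  · have h0 : e ^ 3 * y = e * (e * (e * y)) := by noncomm_ring
    have h1 : e * (e * y) = w * (w * (y * (e * e))) + (1 - w * w) * (e * g) := by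
      rw [ey, mul_add, hwl, ← mul_assoc e y, ey, sub_mul, mul_sub, hwl]
      simp only [add_mul, sub_mul, mul_add, mul_sub, mul_assoc, one_mul, ge]
      abel
    have h2 : e * (e * (e * y)) = w * (w * (w * (y * (e * (e * e)))))
        + (1 - w * w * w) * (e * (e * g)) := by
      rw [h1, mul_add, hwl, hwl, ← mul_assoc e y, ey]
      simp only [add_mul, sub_mul, mul_add, mul_sub, mul_assoc, one_mul, ge, hwl]
      rw [← mul_assoc g e e, ge, mul_assoc, ge]
      abel
    rw [h0, h2, hw3', hw3, sub_self, zero_mul, add_zero]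
    noncomm_ring

theorem stmt14 (k : Type*) [Field k] (h2 : (2 : k) ≠ 0) (h3 : (3 : k) ≠ 0)
    (ω : k) (hω : IsPrimitiveRoot ω 3) :
    gε k ω * gx k = algebraMap k (GCA k) ω * (gx k * gε k ω) ∧
      gε k ω * gy k = algebraMap k (GCA k) ω * (gy k * gε k ω) +
        algebraMap k (GCA k) (1 - ω) * gγ k ∧
      gε k ω ^ 3 ∈ Set.center (GCA k) := by
  have r1 := RingQuot.mkAlgHom_rel k (GCRel.rel1 (k := k))
  have r2 := RingQuot.mkAlgHom_rel k (GCRel.rel2 (k := k))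
  have r3 := RingQuot.mkAlgHom_rel k (GCRel.rel3 (k := k))
  simp only [map_mul, map_add, map_pow] at r1 r2 r3
  have hw3 : algebraMap k (GCA k) ω * algebraMap k (GCA k) ω * algebraMap k (GCA k) ω = 1 := by
    rw [← map_mul, ← map_mul, ← map_one (algebraMap k (GCA k))]
    congr 1
    rw [← hω.pow_eq_one]; ring
  obtain ⟨ex, ey, cx, cy⟩ := gca_aux (gx k) (gy k) (algebraMap k (GCA k) ω) (gε k ω) (gγ k)
    r1 r2 r3 (fun a => (Algebra.commutes ω a).symm) hw3
    (by rw [gε, map_pow, pow_two (algebraMap k (GCA k) ω)]) rfl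
  refine ⟨ex, ?_, gca_center k _ cx cy⟩
  rw [map_sub, map_one]
  exact ey
end
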